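/- arXiv:2404.08193 — 2 statements merged into one kernel-verified Lean document; each statement's English description precedes it below -/
import Mathlib

section
/- For every integer k ≥ 2, there exists a positive integer J such that for every integer j ≥ J, the set of positive integers that are not (j,k)-representable is finite. -/
/-- A positive integer `n` is `(j,k)`-representable if it is a sum of exactly `j`
positive `k`-th powers. -/
def IsRepr (n j k : ℕ) : Prop :=
  ∃ a : Fin j → ℕ, (∀ i, 0 < a i) ∧ ∑ i, (a i) ^ k = n

namespace Waring

open Finset

lemma card_mul_le_of_pairwise_dvd_sub (S : Finset ℤ) (Y m : ℕ) (hm : 1 ≤ m) (hmY : m ≤ Y)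
    (hS : ∀ y ∈ S, y ∈ Icc (-(Y : ℤ)) Y) (hc : ∀ y ∈ S, ∀ z ∈ S, (m : ℤ) ∣ y - z) :
    #S * m ≤ 3 * Y := by
  have hm0 : (0 : ℤ) < m := by exact_mod_cast hm
  have hcard : #S ≤ #(Icc (0 : ℤ) (2 * Y / m)) := by
    refine card_le_card_of_injOn (fun y => (y + Y) / m) ?_ ?_
    · intro y hy
      have := mem_Icc.1 (hS y hy)
      simp only [coe_Icc, Set.mem_Icc]
      exact ⟨Int.ediv_nonneg (by linarith) hm0.le, Int.ediv_le_ediv hm0 (by linarith)⟩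
    · intro y hy z hz h
      have hmod : (y + Y) % (m : ℤ) = (z + Y) % m :=
        Int.ModEq.symm ((Int.modEq_iff_dvd).2 (by simpa using hc y hy z hz))
      have h1 := Int.emod_add_mul_ediv (y + Y) m
      have h2 := Int.emod_add_mul_ediv (z + Y) m
      simp only at h
      rw [h, hmod] at h1
      linarith
  rw [Int.card_Icc] at hcard
  have h2 : (2 * (Y : ℤ) / m + 1 - 0).toNat = 2 * Y / m + 1 := by
    have : 2 * (Y : ℤ) / m = ((2 * Y / m : ℕ) : ℤ) := by push_cast; rfl
    rw [this, sub_zero]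
    exact Int.toNat_natCast (2 * Y / m + 1)
  rw [h2] at hcard
  calc #S * m ≤ (2 * Y / m + 1) * m := by gcongr
    _ = 2 * Y / m * m + m := by ring
    _ ≤ 2 * Y + m := Nat.add_le_add_right (Nat.div_mul_le_self _ _) _
    _ ≤ 3 * Y := by omega

lemma card_mul_le_of_pairwise_dvd_mul_sub (S : Finset ℤ) (Y m c : ℕ) (hm : 1 ≤ m) (hmY : m ≤ Y)
    (hS : ∀ y ∈ S, y ∈ Icc (-(Y : ℤ)) Y) (hc : ∀ y ∈ S, ∀ z ∈ S, (m : ℤ) ∣ c * y - c * z) :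
    #S * m ≤ 3 * Y * m.gcd c := by
  obtain ⟨e, he⟩ := Nat.gcd_dvd_left m c
  have hg : 0 < m.gcd c := Nat.gcd_pos_of_pos_left _ hm
  have hdiv : (m : ℤ) / (Int.gcd m c : ℕ) = e := by
    rw [Int.gcd_natCast_natCast]
    have : (m : ℤ) = (m.gcd c : ℕ) * e := by exact_mod_cast he
    nth_rewrite 1 [this]
    exact Int.mul_ediv_cancel_left _ (by exact_mod_cast hg.ne')
  have he0 : 1 ≤ e := Nat.pos_of_ne_zero (by rintro rfl; omega)
  have heY : e ≤ Y := le_trans (le_trans (Nat.le_mul_of_pos_left e hg) he.symm.le) hmY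
  have := card_mul_le_of_pairwise_dvd_sub S Y e he0 heY hS fun y hy z hz => by
    have h := Int.ModEq.cancel_left_div_gcd (m := m) (c := c) (a := z) (b := y)
      (by exact_mod_cast hm) ((Int.modEq_iff_dvd).2 (hc y hy z hz))
    rw [hdiv] at h
    exact (Int.modEq_iff_dvd).1 h
  calc #S * m = #S * e * m.gcd c := by nth_rewrite 1 [he]; ring
    _ ≤ _ := by gcongr

lemma card_linear_two_mul_left_le (Y a b : ℕ) (n : ℤ) (ha : 1 ≤ a) (haY : a ≤ Y) :
    #{y ∈ Icc (-(Y : ℤ)) Y ×ˢ Icc (-(Y : ℤ)) Y | (a : ℤ) * y.1 + b * y.2 = n} * a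
      ≤ 3 * Y * a.gcd b := by
  set S := {y ∈ Icc (-(Y : ℤ)) Y ×ˢ Icc (-(Y : ℤ)) Y | (a : ℤ) * y.1 + b * y.2 = n} with hS
  have hmem : ∀ y ∈ S, y.2 ∈ Icc (-(Y : ℤ)) Y ∧ (a : ℤ) * y.1 + b * y.2 = n := fun y hy => by
    rw [hS, mem_filter, mem_product] at hy
    exact ⟨hy.1.2, hy.2⟩
  have hcard : #(S.image Prod.snd) = #S := card_image_of_injOn fun y hy z hz h => by
    have h1 := (hmem y hy).2
    have h2 := (hmem z hz).2
    replace h : y.2 = z.2 := h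
    rw [h] at h1
    have : (a : ℤ) * y.1 = a * z.1 := by linarith
    exact Prod.ext (mul_left_cancel₀ (by exact_mod_cast (by omega : a ≠ 0)) this) h
  rw [← hcard]
  refine card_mul_le_of_pairwise_dvd_mul_sub _ Y a b ha haY ?_ ?_
  · intro y hy
    obtain ⟨p, hp, rfl⟩ := mem_image.1 hy
    exact (hmem p hp).1
  · intro y hy z hz
    obtain ⟨p, hp, rfl⟩ := mem_image.1 hy
    obtain ⟨q, hq, rfl⟩ := mem_image.1 hz
    exact ⟨q.1 - p.1, by linarith [(hmem p hp).2, (hmem q hq).2]⟩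

lemma card_linear_two_mul_max_le (Y a b : ℕ) (n : ℤ) (ha : 1 ≤ a) (haY : a ≤ Y) (hb : 1 ≤ b)
    (hbY : b ≤ Y) :
    #{y ∈ Icc (-(Y : ℤ)) Y ×ˢ Icc (-(Y : ℤ)) Y | (a : ℤ) * y.1 + b * y.2 = n} * max a b
      ≤ 3 * Y * a.gcd b := by
  rcases le_total b a with h | h
  · rw [max_eq_left h]
    exact card_linear_two_mul_left_le Y a b n ha haY
  · rw [max_eq_right h, Nat.gcd_comm]
    refine le_trans (Nat.mul_le_mul_right _ ?_) (card_linear_two_mul_left_le Y b a n hb hbY)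
    refine card_le_card_of_injOn Prod.swap ?_ Prod.swap_injective.injOn
    intro y hy
    simp only [coe_filter, mem_product, Set.mem_ofPred_eq] at hy ⊢
    exact ⟨hy.1.symm, by rw [← hy.2]; simp [add_comm]⟩

lemma card_linear_four_mul_max_le (Y a b c d : ℕ) (ha : 1 ≤ a) (haY : a ≤ Y) (hb : 1 ≤ b)
    (hbY : b ≤ Y) :
    #{y ∈ (Icc (-(Y : ℤ)) Y ×ˢ Icc (-(Y : ℤ)) Y) ×ˢ (Icc (-(Y : ℤ)) Y ×ˢ Icc (-(Y : ℤ)) Y) |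
      (a : ℤ) * y.1.1 + b * y.1.2 + (c * y.2.1 + d * y.2.2) = 0} * max a b
      ≤ 27 * Y ^ 3 * (a.gcd b).gcd c := by
  set I := Icc (-(Y : ℤ)) Y with hI
  have hgpos : 1 ≤ a.gcd b := Nat.gcd_pos_of_pos_left _ ha
  have hgY : a.gcd b ≤ Y := (Nat.gcd_le_left b ha).trans haY
  have hIcard : #I ≤ 3 * Y := by rw [hI, Int.card_Icc]; omega
  have hinner : ∀ z ∈ I ×ˢ I,
      #{y ∈ (I ×ˢ I) ×ˢ (I ×ˢ I) |
        (a : ℤ) * y.1.1 + b * y.1.2 + (c * y.2.1 + d * y.2.2) = 0 ∧ y.2 = z} * max a b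
      ≤ if ((a.gcd b : ℕ) : ℤ) ∣ c * z.1 + d * z.2 then 3 * Y * a.gcd b else 0 := by
    intro z hz
    split_ifs with hdvd
    · refine le_trans (Nat.mul_le_mul_right _ ?_)
        (card_linear_two_mul_max_le Y a b (-(c * z.1 + d * z.2)) ha haY hb hbY)
      refine card_le_card_of_injOn Prod.fst ?_ ?_
      · intro y hy
        simp only [coe_filter, mem_product, Set.mem_ofPred_eq] at hy ⊢
        obtain ⟨⟨h1, h2⟩, h3, rfl⟩ := hy
        exact ⟨h1, by linarith⟩
      · intro y hy y' hy' h
        simp only [coe_filter, Set.mem_ofPred_eq] at hy hy'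
        exact Prod.ext h (hy.2.2.trans hy'.2.2.symm)
    · rw [Nat.le_zero, Nat.mul_eq_zero]
      left
      rw [card_eq_zero, filter_eq_empty_iff]
      rintro y - ⟨h1, rfl⟩
      apply hdvd
      have e1 : ((a.gcd b : ℕ) : ℤ) ∣ a := by exact_mod_cast Nat.gcd_dvd_left a b
      have e2 : ((a.gcd b : ℕ) : ℤ) ∣ b := by exact_mod_cast Nat.gcd_dvd_right a b
      have : (c : ℤ) * y.2.1 + d * y.2.2 = -(a * y.1.1 + b * y.1.2) := by linarith
      rw [this, dvd_neg]
      exact dvd_add (e1.mul_right _) (e2.mul_right _)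
  have hcount : ∀ w : ℤ, #{v ∈ I | ((a.gcd b : ℕ) : ℤ) ∣ c * v + d * w} * a.gcd b
      ≤ 3 * Y * (a.gcd b).gcd c := by
    intro w
    refine card_mul_le_of_pairwise_dvd_mul_sub _ Y (a.gcd b) c hgpos hgY ?_ ?_
    · intro y hy
      exact (mem_filter.1 hy).1
    · intro y hy z hz
      have := dvd_sub (mem_filter.1 hy).2 (mem_filter.1 hz).2
      rwa [add_sub_add_right_eq_sub] at this
  rw [card_eq_sum_card_fiberwise (f := Prod.snd) (t := I ×ˢ I)
    (fun y hy => (mem_product.1 (mem_filter.1 hy).1).2), sum_mul]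
  simp only [filter_filter]
  calc _ ≤ ∑ z ∈ I ×ˢ I,
        if ((a.gcd b : ℕ) : ℤ) ∣ c * z.1 + d * z.2 then 3 * Y * a.gcd b else 0 := sum_le_sum hinner
    _ = ∑ w ∈ I, ∑ v ∈ I,
        if ((a.gcd b : ℕ) : ℤ) ∣ c * v + d * w then 3 * Y * a.gcd b else 0 := by
        rw [sum_product_right]
    _ = ∑ w ∈ I, 3 * Y * (#{v ∈ I | ((a.gcd b : ℕ) : ℤ) ∣ c * v + d * w} * a.gcd b) := by
        refine sum_congr rfl fun w _ => ?_
        rw [← sum_filter, sum_const, smul_eq_mul]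
        ring
    _ ≤ ∑ w ∈ I, 3 * Y * (3 * Y * (a.gcd b).gcd c) :=
        sum_le_sum fun w _ => Nat.mul_le_mul_left _ (hcount w)
    _ = #I * (3 * Y * (3 * Y * (a.gcd b).gcd c)) := by rw [sum_const, smul_eq_mul]
    _ ≤ 3 * Y * (3 * Y * (3 * Y * (a.gcd b).gcd c)) := by gcongr
    _ = _ := by ring

lemma sum_Icc_ite_dvd_le (n d : ℕ) :
    ∑ a ∈ Icc 1 n, (if d ∣ a then (1 : ℝ) else 0) ≤ n / d := by
  rw [← sum_filter, sum_const, nsmul_eq_mul, mul_one]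
  have : #{a ∈ Icc 1 n | d ∣ a} = n / d := Nat.Ioc_filter_dvd_card_eq_div n d
  rw [this]
  exact Nat.cast_div_le

lemma sum_gcd_div_left_le (X : ℕ) :
    ∑ a ∈ Icc 1 X, ∑ b ∈ Icc 1 X, ∑ c ∈ Icc 1 X,
      (if b ≤ a then (((a.gcd b).gcd c : ℕ) : ℝ) / a else 0) ≤ 2 * (X : ℝ) ^ 2 := by
  have hgcd : ∀ a ∈ Icc 1 X, ∀ b ∈ Icc 1 X, ∀ c ∈ Icc 1 X,
      (if b ≤ a then (((a.gcd b).gcd c : ℕ) : ℝ) / a else 0) ≤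
      ∑ d ∈ Icc 1 X, (if d ∣ a then (d : ℝ) / a else 0) *
        ((if b ≤ a then (if d ∣ b then (1 : ℝ) else 0) else 0) * (if d ∣ c then 1 else 0)) := by
    intro a ha b _ c _
    rw [mem_Icc] at ha
    split_ifs with hab
    · set g := (a.gcd b).gcd c with hg
      have hga : g ∣ a := (Nat.gcd_dvd_left _ _).trans (Nat.gcd_dvd_left _ _)
      have hgb : g ∣ b := (Nat.gcd_dvd_left _ _).trans (Nat.gcd_dvd_right _ _)
      have hgc : g ∣ c := Nat.gcd_dvd_right _ _
      have hmem : g ∈ Icc 1 X :=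
        mem_Icc.2 ⟨Nat.pos_of_dvd_of_pos hga ha.1, (Nat.le_of_dvd ha.1 hga).trans ha.2⟩
      refine le_trans (le_of_eq ?_) (single_le_sum (fun d _ => by positivity) hmem)
      simp [hga, hgb, hgc]
    · simp
  have hb : ∀ a ∈ Icc 1 X, ∀ d : ℕ,
      ∑ b ∈ Icc 1 X, (if b ≤ a then (if d ∣ b then (1 : ℝ) else 0) else 0) ≤ a / d := by
    intro a ha d
    rw [← sum_filter]
    have : (Icc 1 X).filter (· ≤ a) = Icc 1 a := by
      ext b
      simp only [mem_filter, mem_Icc] at ha ⊢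
      omega
    rw [this]
    exact sum_Icc_ite_dvd_le a d
  calc _ ≤ ∑ a ∈ Icc 1 X, ∑ b ∈ Icc 1 X, ∑ c ∈ Icc 1 X,
        ∑ d ∈ Icc 1 X, (if d ∣ a then (d : ℝ) / a else 0) *
        ((if b ≤ a then (if d ∣ b then (1 : ℝ) else 0) else 0) * (if d ∣ c then 1 else 0)) :=
        sum_le_sum fun a ha => sum_le_sum fun b hb => sum_le_sum fun c hc => hgcd a ha b hb c hc
    _ = ∑ d ∈ Icc 1 X, ∑ a ∈ Icc 1 X, (if d ∣ a then (d : ℝ) / a else 0) *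
        ((∑ b ∈ Icc 1 X, (if b ≤ a then (if d ∣ b then (1 : ℝ) else 0) else 0)) *
          ∑ c ∈ Icc 1 X, (if d ∣ c then 1 else 0)) := by
        simp_rw [sum_mul_sum, mul_sum]
        symm
        rw [sum_comm]
        refine sum_congr rfl fun a _ => ?_
        rw [sum_comm]
        exact sum_congr rfl fun b _ => sum_comm
    _ ≤ ∑ d ∈ Icc 1 X, ∑ a ∈ Icc 1 X, (if d ∣ a then (d : ℝ) / a else 0) *
        ((a / d) * (X / d)) := by
        refine sum_le_sum fun d _ => sum_le_sum fun a ha => ?_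
        refine mul_le_mul_of_nonneg_left ?_ (by positivity)
        exact mul_le_mul (hb a ha d) (sum_Icc_ite_dvd_le X d)
          (sum_nonneg fun _ _ => by positivity) (by positivity)
    _ = ∑ d ∈ Icc 1 X, (∑ a ∈ Icc 1 X, (if d ∣ a then (1 : ℝ) else 0)) * (X / d) := by
        refine sum_congr rfl fun d hd => ?_
        rw [sum_mul]
        refine sum_congr rfl fun a ha => ?_
        have hd0 : (d : ℝ) ≠ 0 := by simp at hd ⊢; omega
        have ha0 : (a : ℝ) ≠ 0 := by simp at ha ⊢; omega
        split_ifs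
        · field_simp
        · simp
    _ ≤ ∑ d ∈ Icc 1 X, (X / d : ℝ) * (X / d) := by
        gcongr with d _
        exact sum_Icc_ite_dvd_le X d
    _ = (X : ℝ) ^ 2 * ∑ d ∈ Icc 1 X, ((d : ℝ) ^ 2)⁻¹ := by
        rw [mul_sum]
        refine sum_congr rfl fun d hd => ?_
        ring
    _ ≤ (X : ℝ) ^ 2 * 2 := by
        gcongr
        have h := sum_Ioo_inv_sq_le (α := ℝ) 0 (X + 1)
        have : Ioo 0 (X + 1) = Icc 1 X := by ext; simp; omega
        rw [this] at h
        simpa using h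
    _ = _ := by ring

lemma sum_gcd_div_max_le (X : ℕ) :
    ∑ a ∈ Icc 1 X, ∑ b ∈ Icc 1 X, ∑ c ∈ Icc 1 X,
      (((a.gcd b).gcd c : ℕ) : ℝ) / (max a b : ℕ) ≤ 4 * (X : ℝ) ^ 2 := by
  have hle : ∀ a b c : ℕ, (((a.gcd b).gcd c : ℕ) : ℝ) / (max a b : ℕ) ≤
      (if b ≤ a then (((a.gcd b).gcd c : ℕ) : ℝ) / a else 0) +
      (if a ≤ b then (((b.gcd a).gcd c : ℕ) : ℝ) / b else 0) := by
    intro a b c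
    rw [Nat.gcd_comm b a]
    rcases le_total b a with h | h
    · rw [max_eq_left h, if_pos h]
      exact le_add_of_nonneg_right (by positivity)
    · rw [max_eq_right h, if_pos h]
      exact le_add_of_nonneg_left (by positivity)
  refine (sum_le_sum fun a _ => sum_le_sum fun b _ => sum_le_sum fun c _ => hle a b c).trans ?_
  simp only [sum_add_distrib]
  have hswap : ∑ a ∈ Icc 1 X, ∑ b ∈ Icc 1 X, ∑ c ∈ Icc 1 X,
      (if a ≤ b then (((b.gcd a).gcd c : ℕ) : ℝ) / b else 0) ≤ 2 * (X : ℝ) ^ 2 := by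
    rw [sum_comm]
    exact sum_gcd_div_left_le X
  linarith [sum_gcd_div_left_le X]

lemma card_sum_four_products_eq_zero_le (X Y : ℕ) (hXY : X ≤ Y) (A : Finset (ℕ × ℤ))
    (hA : A = Icc 1 X ×ˢ Icc (-(Y : ℤ)) Y) :
    (#{q ∈ (A ×ˢ A) ×ˢ (A ×ˢ A) | (q.1.1.1 * q.1.1.2 + q.1.2.1 * q.1.2.2) +
      (q.2.1.1 * q.2.1.2 + q.2.2.1 * q.2.2.2) = (0 : ℤ)} : ℝ) ≤ 108 * (X * Y : ℝ) ^ 3 := by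
  set H := Icc 1 X with hH
  have hfib : ∀ h ∈ (H ×ˢ H) ×ˢ (H ×ˢ H),
      (#{q ∈ (A ×ˢ A) ×ˢ (A ×ˢ A) | (q.1.1.1 * q.1.1.2 + q.1.2.1 * q.1.2.2) +
        (q.2.1.1 * q.2.1.2 + q.2.2.1 * q.2.2.2) = (0 : ℤ) ∧
        ((q.1.1.1, q.1.2.1), (q.2.1.1, q.2.2.1)) = h} : ℝ) ≤
      27 * (Y : ℝ) ^ 3 * ((((h.1.1.gcd h.1.2).gcd h.2.1 : ℕ) : ℝ) / (max h.1.1 h.1.2 : ℕ)) := by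
    rintro ⟨⟨a, b⟩, ⟨c, d⟩⟩ hh
    simp only [hH, mem_product, mem_Icc] at hh
    obtain ⟨⟨⟨ha, haX⟩, hb, hbX⟩, -⟩ := hh
    have hmax : (0 : ℝ) < (max a b : ℕ) := by
      exact_mod_cast lt_of_lt_of_le (Nat.lt_of_lt_of_le Nat.zero_lt_one ha) (le_max_left a b)
    have key := card_linear_four_mul_max_le Y a b c d ha (haX.trans hXY) hb (hbX.trans hXY)
    rw [← mul_div_assoc, le_div_iff₀ hmax]
    refine le_trans ?_ (show ((_ : ℕ) : ℝ) ≤ _ from by exact_mod_cast key)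
    rw [Nat.cast_mul]
    gcongr
    refine card_le_card_of_injOn
      (fun q => ((q.1.1.2, q.1.2.2), (q.2.1.2, q.2.2.2))) ?_ ?_
    · rintro ⟨⟨⟨a', y₁⟩, ⟨b', y₂⟩⟩, ⟨⟨c', y₃⟩, ⟨d', y₄⟩⟩⟩ hq
      simp only [hA, coe_filter, mem_product, Set.mem_ofPred_eq, Prod.mk.injEq] at hq ⊢
      obtain ⟨hm, h0, ⟨rfl, rfl⟩, rfl, rfl⟩ := hq
      exact ⟨⟨⟨hm.1.1.2, hm.1.2.2⟩, hm.2.1.2, hm.2.2.2⟩, h0⟩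
    · rintro ⟨⟨⟨a', y₁⟩, ⟨b', y₂⟩⟩, ⟨⟨c', y₃⟩, ⟨d', y₄⟩⟩⟩ hq
        ⟨⟨⟨a'', z₁⟩, ⟨b'', z₂⟩⟩, ⟨⟨c'', z₃⟩, ⟨d'', z₄⟩⟩⟩ hq' h
      simp only [coe_filter, Set.mem_ofPred_eq, Prod.mk.injEq] at hq hq' h ⊢
      obtain ⟨-, -, ⟨rfl, rfl⟩, rfl, rfl⟩ := hq
      obtain ⟨-, -, ⟨rfl, rfl⟩, rfl, rfl⟩ := hq'
      tauto
  rw [card_eq_sum_card_fiberwise (f := fun q => ((q.1.1.1, q.1.2.1), (q.2.1.1, q.2.2.1)))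
    (t := (H ×ˢ H) ×ˢ (H ×ˢ H)) (by
      intro q hq
      simp only [hA, coe_filter, mem_product, Set.mem_ofPred_eq, coe_product, Set.mem_prod,
        mem_coe] at hq ⊢
      tauto)]
  simp only [filter_filter]
  push_cast
  refine (sum_le_sum hfib).trans ?_
  rw [← mul_sum, sum_product, sum_product]
  simp only [sum_product, sum_const, nsmul_eq_mul, hH, Nat.card_Icc, Nat.add_sub_cancel, ← mul_sum]
  nlinarith [mul_le_mul_of_nonneg_left (sum_gcd_div_max_le X)
    (show (0 : ℝ) ≤ 27 * (Y : ℝ) ^ 3 * X by positivity)]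

open MeasureTheory AddCircle in
lemma integral_fourier (n : ℤ) :
    ∫ t : UnitAddCircle, fourier n t ∂haarAddCircle = if n = 0 then 1 else 0 := by
  have h := congrFun (fourierCoeff_fourier (T := 1) n) 0
  simp only [fourierCoeff, neg_zero, fourier_zero, one_smul] at h
  rw [h, Pi.single_apply]
  simp [eq_comm]

lemma _root_.Continuous.integrable_haarAddCircle {E : Type*} [NormedAddCommGroup E]
    {f : UnitAddCircle → E} (hf : Continuous f) :
    MeasureTheory.Integrable f AddCircle.haarAddCircle :=
  hf.integrable_of_hasCompactSupport (HasCompactSupport.of_compactSpace f)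

lemma norm_fourier_apply (n : ℤ) (t : UnitAddCircle) : ‖(fourier n t : ℂ)‖ = 1 := by
  rw [fourier_apply]
  exact Circle.norm_coe _

/-- The exponential sum over `s` with phases `φ`. -/
noncomputable def expSum {ι : Type*} (s : Finset ι) (φ : ι → ℤ) (t : UnitAddCircle) : ℂ :=
  ∑ i ∈ s, fourier (φ i) t

@[fun_prop]
lemma continuous_expSum {ι : Type*} (s : Finset ι) (φ : ι → ℤ) : Continuous (expSum s φ) := by
  unfold expSum
  fun_prop

lemma expSum_mul {ι κ : Type*} (s : Finset ι) (r : Finset κ) (φ : ι → ℤ) (ψ : κ → ℤ)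
    (t : UnitAddCircle) :
    expSum s φ t * expSum r ψ t = expSum (s ×ˢ r) (fun z => φ z.1 + ψ z.2) t := by
  simp only [expSum, sum_mul_sum, sum_product, fourier_add]

lemma fourier_sum {ι : Type*} (s : Finset ι) (f : ι → ℤ) (t : UnitAddCircle) :
    (fourier (∑ i ∈ s, f i) t : ℂ) = ∏ i ∈ s, fourier (f i) t := by
  classical
  induction s using Finset.induction_on with
  | empty => simp
  | insert i s hi ih => rw [sum_insert hi, prod_insert hi, fourier_add, ih]

lemma expSum_pow {ι : Type*} (s : Finset ι) (φ : ι → ℤ) (n : ℕ) (t : UnitAddCircle) :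
    expSum s φ t ^ n =
      expSum (Fintype.piFinset fun _ : Fin n => s) (fun x => ∑ i, φ (x i)) t := by
  simp only [expSum, fourier_sum]
  rw [sum_pow']

lemma conj_expSum {ι : Type*} (s : Finset ι) (φ : ι → ℤ) (t : UnitAddCircle) :
    starRingEnd ℂ (expSum s φ t) = expSum s (fun i => -φ i) t := by
  simp only [expSum, map_sum, fourier_neg]

lemma norm_expSum_sq {ι : Type*} (s : Finset ι) (φ : ι → ℤ) (t : UnitAddCircle) :
    ((‖expSum s φ t‖ ^ 2 : ℝ) : ℂ) = expSum (s ×ˢ s) (fun z => φ z.1 - φ z.2) t := by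
  simp only [sub_eq_add_neg]
  rw [← expSum_mul s s φ (fun i => -φ i), ← conj_expSum, Complex.mul_conj']
  push_cast
  rfl

lemma norm_expSum_pow {ι : Type*} (s : Finset ι) (φ : ι → ℤ) (n : ℕ) (t : UnitAddCircle) :
    ((‖expSum s φ t‖ ^ (2 * n) : ℝ) : ℂ) =
      expSum ((Fintype.piFinset fun _ : Fin n => s) ×ˢ (Fintype.piFinset fun _ : Fin n => s))
        (fun z => ∑ i, φ (z.1 i) - ∑ i, φ (z.2 i)) t := by
  rw [← norm_expSum_sq (Fintype.piFinset fun _ : Fin n => s) (fun x => ∑ i, φ (x i)),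
    ← expSum_pow, norm_pow, ← pow_mul, mul_comm]

open MeasureTheory AddCircle in
lemma card_filter_eq_le_integral {ι : Type*} (s : Finset ι) (φ : ι → ℤ) (m : ℤ) :
    (#{i ∈ s | φ i = m} : ℝ) ≤ ∫ t, ‖expSum s φ t‖ ∂haarAddCircle := by
  have h : ∫ t, expSum s φ t * fourier (-m) t ∂haarAddCircle = (#{i ∈ s | φ i = m} : ℂ) := by
    simp only [expSum, sum_mul, ← fourier_add]
    rw [integral_finsetSum _ fun i _ =>
      Continuous.integrable_haarAddCircle (by fun_prop)]
    simp only [integral_fourier, add_neg_eq_zero]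
    rw [← sum_filter]
    simp
  calc (#{i ∈ s | φ i = m} : ℝ) = ‖(#{i ∈ s | φ i = m} : ℂ)‖ := by simp
    _ ≤ ∫ t, ‖expSum s φ t * fourier (-m) t‖ ∂haarAddCircle := by
      rw [← h]
      exact norm_integral_le_integral_norm _
    _ = _ := by simp only [norm_mul, norm_fourier_apply, mul_one]

open MeasureTheory AddCircle in
lemma integral_pow_four_le {ι : Type*} (s : Finset ι) (w : ι → ℝ) (φ : ι → ℤ) (R : ℝ)
    (hw : ∀ i ∈ s, 0 ≤ w i) (hR : ∀ i ∈ s, w i ≤ R) (T : UnitAddCircle → ℝ)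
    (hT : ∀ t, (T t : ℂ) = ∑ i ∈ s, (w i : ℂ) * fourier (φ i) t) :
    ∫ t, T t ^ 4 ∂haarAddCircle ≤
      R ^ 4 * #{q ∈ (s ×ˢ s) ×ˢ (s ×ˢ s) | (φ q.1.1 + φ q.1.2) + (φ q.2.1 + φ q.2.2) = 0} := by
  have hpow : ∀ t, ((T t ^ 4 : ℝ) : ℂ) = ∑ q ∈ (s ×ˢ s) ×ˢ (s ×ˢ s),
      ((w q.1.1 * w q.1.2 * (w q.2.1 * w q.2.2) : ℝ) : ℂ) *
        fourier ((φ q.1.1 + φ q.1.2) + (φ q.2.1 + φ q.2.2)) t := by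
    intro t
    have : ((T t ^ 4 : ℝ) : ℂ) = ((T t : ℂ) * T t) * ((T t : ℂ) * T t) := by push_cast; ring
    rw [this, hT, sum_mul_sum, ← sum_product', sum_mul_sum, ← sum_product']
    refine sum_congr rfl fun q _ => ?_
    simp only [fourier_add]
    push_cast
    ring
  have hint : ((∫ t, T t ^ 4 ∂haarAddCircle : ℝ) : ℂ) = ((∑ q ∈ (s ×ˢ s) ×ˢ (s ×ˢ s),
      (w q.1.1 * w q.1.2 * (w q.2.1 * w q.2.2)) *
        (if (φ q.1.1 + φ q.1.2) + (φ q.2.1 + φ q.2.2) = 0 then 1 else 0) : ℝ) : ℂ) := by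
    rw [← integral_complex_ofReal]
    simp only [hpow]
    rw [integral_finsetSum _ fun i _ =>
      Continuous.integrable_haarAddCircle (by fun_prop)]
    simp only [integral_const_mul, integral_fourier]
    push_cast [apply_ite]
    rfl
  rw [Complex.ofReal_injective hint]
  simp only [mul_ite, mul_one, mul_zero]
  rw [← sum_filter, ← nsmul_eq_mul']
  refine sum_le_card_nsmul _ _ _ fun q hq => ?_
  simp only [mem_filter, mem_product] at hq
  obtain ⟨⟨⟨h1, h2⟩, h3, h4⟩, -⟩ := hq
  have hR0 : 0 ≤ R := (hw _ h1).trans (hR _ h1)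
  calc _ ≤ R * R * (R * R) := by
        have := hw _ h1; have := hw _ h2; have := hw _ h3; have := hw _ h4
        have := hR _ h1; have := hR _ h2; have := hR _ h3; have := hR _ h4
        gcongr
    _ = R ^ 4 := by ring

/-- The value at `x` of the polynomial of degree at most `k` with coefficients `a`. -/
def polyVal (k : ℕ) (a : ℕ → ℕ) (x : ℕ) : ℕ := ∑ i ∈ range (k + 1), a i * x ^ i

lemma polyVal_mono (k : ℕ) (a : ℕ → ℕ) : Monotone (polyVal k a) := fun x y hxy => by
  unfold polyVal
  gcongr

/-- The divided difference `((x + h) ^ i - x ^ i) / h`. -/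
def powDiff (i h x : ℕ) : ℕ := ∑ j ∈ range i, i.choose j * h ^ (i - 1 - j) * x ^ j

lemma add_pow_eq_add_mul_powDiff (i h x : ℕ) : (x + h) ^ i = x ^ i + h * powDiff i h x := by
  rw [add_pow, sum_range_succ, powDiff, mul_sum, add_comm]
  congr 1
  · simp
  · refine sum_congr rfl fun j hj => ?_
    have : i - j = (i - 1 - j) + 1 := by have := mem_range.1 hj; omega
    rw [this, pow_succ, Nat.cast_id]
    ring

lemma mul_powDiff_le (i h P : ℕ) (hP : h ≤ P) : P * powDiff i h P ≤ 2 ^ i * P ^ i := by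
  calc P * powDiff i h P = ∑ j ∈ range i, i.choose j * (h ^ (i - 1 - j) * (P ^ j * P)) := by
        rw [powDiff, mul_sum]
        exact sum_congr rfl fun j _ => by ring
    _ ≤ ∑ j ∈ range i, i.choose j * (P ^ (i - 1 - j) * (P ^ j * P)) := by gcongr
    _ = ∑ j ∈ range i, i.choose j * P ^ i := by
        refine sum_congr rfl fun j hj => ?_
        have := mem_range.1 hj
        rw [← pow_succ, ← pow_add]
        congr 2
        omega
    _ = (∑ j ∈ range i, i.choose j) * P ^ i := by rw [sum_mul]
    _ ≤ 2 ^ i * P ^ i := by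
        gcongr
        rw [← Nat.sum_range_choose]
        exact sum_le_sum_of_subset (range_subset_range.2 (Nat.le_succ i))

lemma exists_polyVal_difference (k : ℕ) (a : ℕ → ℕ) (h : ℕ) (ha : a (k + 1) ≠ 0) :
    ∃ b : ℕ → ℕ, b k ≠ 0 ∧
      (∀ x, polyVal (k + 1) a (x + h) = polyVal (k + 1) a x + h * polyVal k b x) ∧
      ∀ P, h ≤ P → P * polyVal k b P ≤ 2 ^ (k + 1) * polyVal (k + 1) a P := by
  let b : ℕ → ℕ := fun j =>
    ∑ i ∈ range (k + 2), if j < i then a i * (i.choose j * h ^ (i - 1 - j)) else 0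
  have hb : ∀ x, polyVal k b x = ∑ i ∈ range (k + 2), a i * powDiff i h x := by
    intro x
    simp only [polyVal, b, sum_mul, powDiff, mul_sum]
    rw [sum_comm]
    refine sum_congr rfl fun i hi => ?_
    have : range i = (range (k + 1)).filter (· < i) := by
      ext j
      simp only [mem_filter, mem_range] at hi ⊢
      omega
    rw [this, sum_filter]
    refine sum_congr rfl fun j _ => ?_
    split_ifs <;> ring
  refine ⟨b, ?_, ?_, ?_⟩
  · have : a (k + 1) * ((k + 1).choose k * h ^ (k + 1 - 1 - k)) ≤ b k := by
      refine le_trans (le_of_eq ?_) (single_le_sum (fun i _ => Nat.zero_le _)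
        (mem_range.2 (Nat.lt_succ_self (k + 1))))
      simp
    rw [Nat.choose_succ_self_right] at this
    have hpos : 0 < a (k + 1) * ((k + 1) * h ^ (k + 1 - 1 - k)) := by
      simp [Nat.pos_of_ne_zero ha]
    omega
  · intro x
    rw [hb, polyVal, polyVal, mul_sum, ← sum_add_distrib]
    refine sum_congr rfl fun i _ => ?_
    rw [add_pow_eq_add_mul_powDiff]
    ring
  · intro P hP
    rw [hb, polyVal, mul_sum, mul_sum]
    refine sum_le_sum fun i hi => ?_
    calc P * (a i * powDiff i h P) = a i * (P * powDiff i h P) := by ring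
      _ ≤ a i * (2 ^ (k + 1) * P ^ i) := by
        refine Nat.mul_le_mul_left _ ((mul_powDiff_le i h P hP).trans ?_)
        gcongr
        · norm_num
        · exact Nat.lt_succ_iff.1 (mem_range.1 hi)
      _ = _ := by ring

lemma sum_range_sum_range_eq {M : Type*} [AddCommMonoid M] (f : ℕ → ℕ → M) (n : ℕ) :
    ∑ x ∈ range n, ∑ y ∈ range n, f x y =
      ∑ x ∈ range n, f x x +
        ∑ h ∈ Ico 1 n, ∑ y ∈ range (n - h), (f (y + h) y + f y (y + h)) := by
  have h1 : ∑ x ∈ range n, ∑ y ∈ range n, f x y =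
      ∑ x ∈ range n, f x x + ∑ x ∈ range n, ∑ y ∈ range x, (f x y + f y x) := by
    induction n with
    | zero => simp
    | succ n ih =>
      simp only [sum_range_succ, sum_add_distrib] at ih ⊢
      rw [ih]
      abel
  rw [h1, sum_sigma', sum_sigma']
  congr 1
  refine sum_nbij' (fun p => ⟨p.1 - p.2, p.2⟩) (fun p => ⟨p.2 + p.1, p.2⟩) ?_ ?_ ?_ ?_ ?_
  · rintro ⟨x, y⟩ h
    simp only [mem_sigma, mem_range, mem_Ico] at h ⊢
    omega
  · rintro ⟨x, y⟩ h
    simp only [mem_sigma, mem_range, mem_Ico] at h ⊢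
    omega
  · rintro ⟨x, y⟩ h
    simp only [mem_sigma, mem_range] at h
    simp only [Sigma.mk.injEq, heq_eq_eq, and_true]
    omega
  · rintro ⟨x, y⟩ h
    simp
  · rintro ⟨x, y⟩ h
    simp only [mem_sigma, mem_range] at h
    rw [show y + (x - y) = x by omega]

lemma norm_sum_range_sq_le (z : ℕ → ℂ) (hz : ∀ x, ‖z x‖ = 1) (n : ℕ) :
    ‖∑ x ∈ range n, z x‖ ^ 2 ≤
      n + 2 * ∑ h ∈ Ico 1 n, ‖∑ x ∈ range (n - h), z (x + h) * starRingEnd ℂ (z x)‖ := by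
  have h1 : ‖∑ x ∈ range n, z x‖ ^ 2 =
      ‖∑ x ∈ range n, ∑ y ∈ range n, z x * starRingEnd ℂ (z y)‖ := by
    rw [← sum_mul_sum, ← map_sum, norm_mul, RCLike.norm_conj, sq]
  rw [h1, sum_range_sum_range_eq]
  refine (norm_add_le _ _).trans (add_le_add ?_ ?_)
  · refine (norm_sum_le _ _).trans ?_
    simp [hz]
  · rw [mul_sum]
    refine (norm_sum_le _ _).trans (sum_le_sum fun h _ => ?_)
    have hconj : ∑ y ∈ range (n - h), z y * starRingEnd ℂ (z (y + h)) =
        starRingEnd ℂ (∑ y ∈ range (n - h), z (y + h) * starRingEnd ℂ (z y)) := by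
      rw [map_sum]
      refine sum_congr rfl fun y _ => ?_
      rw [map_mul, Complex.conj_conj, mul_comm]
    rw [sum_add_distrib, hconj, two_mul]
    exact (norm_add_le _ _).trans (by rw [RCLike.norm_conj])

open MeasureTheory AddCircle in
lemma integral_eq_card_of_eq_expSum {ι : Type*} (s : Finset ι) (φ : ι → ℤ)
    (T : UnitAddCircle → ℝ) (hT : ∀ t, (T t : ℂ) = expSum s φ t) :
    ∫ t, T t ∂haarAddCircle = #{i ∈ s | φ i = 0} := by
  apply Complex.ofReal_injective
  rw [← integral_complex_ofReal]
  simp only [hT, expSum]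
  rw [integral_finsetSum _ fun i _ => Continuous.integrable_haarAddCircle (by fun_prop)]
  simp only [integral_fourier]
  rw [← sum_filter]
  simp

/-- Polynomials of degree `k` with natural number coefficients satisfy the expected bound for the
`(2 * s)`-th moment of their exponential sums. -/
def MomentBound (k s : ℕ) : Prop :=
  ∀ C : ℕ, ∃ K : ℝ, 0 ≤ K ∧ ∀ P : ℕ, 1 ≤ P → ∀ a : ℕ → ℕ, a k ≠ 0 →
    polyVal k a P ≤ C * P ^ k →
    (∫ t, ‖expSum (range (P + 1)) (fun x => (polyVal k a x : ℤ)) t‖ ^ (2 * s)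
      ∂AddCircle.haarAddCircle) * (P : ℝ) ^ k ≤ K * (P : ℝ) ^ (2 * s)

lemma momentBound_one : MomentBound 1 1 := by
  intro C
  refine ⟨2, by norm_num, fun P hP a ha _ => ?_⟩
  rw [mul_one, integral_eq_card_of_eq_expSum _ _ _ fun t => norm_expSum_sq _ _ t]
  have hcard : #{z ∈ range (P + 1) ×ˢ range (P + 1) |
      (polyVal 1 a z.1 : ℤ) - polyVal 1 a z.2 = 0} ≤ P + 1 := by
    conv_rhs => rw [← card_range (P + 1)]
    refine card_le_card_of_injOn Prod.fst ?_ ?_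
    · intro z hz
      simp only [coe_filter, mem_product, Set.mem_ofPred_eq] at hz
      exact hz.1.1
    · have heq : ∀ z ∈ {z ∈ range (P + 1) ×ˢ range (P + 1) |
          (polyVal 1 a z.1 : ℤ) - polyVal 1 a z.2 = 0}, z.2 = z.1 := by
        intro z hz
        have := (mem_filter.1 hz).2
        rw [sub_eq_zero, Nat.cast_inj] at this
        simp only [polyVal, sum_range_succ, range_zero, sum_empty, pow_zero, pow_one, mul_one,
          zero_add, add_right_inj] at this
        exact (Nat.eq_of_mul_eq_mul_left (Nat.pos_of_ne_zero ha) this).symm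
      intro z hz w hw h
      exact Prod.ext h ((heq z hz).trans (h.trans (heq w hw).symm))
  have hP' : (1 : ℝ) ≤ P := by exact_mod_cast hP
  calc _ ≤ ((P + 1 : ℕ) : ℝ) * (P : ℝ) ^ 1 := by gcongr
    _ ≤ 2 * (P : ℝ) ^ 2 := by push_cast; nlinarith

lemma norm_expSum_range_sq_le (p : ℕ → ℕ) (g : ℕ → ℕ → ℕ) (P : ℕ) (hP : 1 ≤ P)
    (hg : ∀ h x, p (x + h) = p x + h * g h x) (t : UnitAddCircle) :
    ‖expSum (range (P + 1)) (fun x => (p x : ℤ)) t‖ ^ 2 ≤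
      2 * (P + ∑ h ∈ Icc 1 P, ‖expSum (range (P + 1 - h)) (fun x => (h : ℤ) * g h x) t‖) := by
  refine (norm_sum_range_sq_le _ (fun x => norm_fourier_apply _ t) (P + 1)).trans ?_
  have hP' : (1 : ℝ) ≤ P := by exact_mod_cast hP
  have hterm : ∀ h x, (fourier (p (x + h) : ℤ) t : ℂ) * starRingEnd ℂ (fourier (p x : ℤ) t) =
      fourier ((h : ℤ) * g h x) t := by
    intro h x
    rw [← fourier_neg, ← fourier_add, hg]
    congr 2
    push_cast
    ring
  simp only [hterm]
  have : Ico 1 (P + 1) = Icc 1 P := rfl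
  rw [this]
  push_cast
  unfold expSum
  linarith

lemma pow_add_sum_le (P s : ℕ) (hs : 1 ≤ s) (F : ℝ) (G : ℕ → ℝ) (hG : ∀ h, 0 ≤ G h)
    (hFG : F ^ 2 ≤ 2 * (P + ∑ h ∈ Icc 1 P, G h)) :
    F ^ (2 * (8 * s)) ≤ 2 ^ (16 * s + 3) *
      ((P : ℝ) ^ (8 * s) + (P : ℝ) ^ (4 * (2 * s - 1)) * (∑ h ∈ Icc 1 P, G h ^ (2 * s)) ^ 4) := by
  set S := ∑ h ∈ Icc 1 P, G h with hS
  have hS0 : 0 ≤ S := sum_nonneg fun h _ => hG h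
  obtain ⟨n, hn⟩ : ∃ n, 2 * s = n + 1 := ⟨2 * s - 1, by omega⟩
  have hU : S ^ (2 * s) ≤ (P : ℝ) ^ n * ∑ h ∈ Icc 1 P, G h ^ (2 * s) := by
    rw [hn]
    simpa using pow_sum_le_card_mul_sum_pow (s := Icc 1 P) (f := G) (fun h _ => hG h) n
  have hU0 : 0 ≤ ∑ h ∈ Icc 1 P, G h ^ (2 * s) := sum_nonneg fun h _ => pow_nonneg (hG h) _
  set U := ∑ h ∈ Icc 1 P, G h ^ (2 * s)
  have h8 : (P + S) ^ (8 * s) ≤ 2 ^ (8 * s - 1) * ((P : ℝ) ^ (8 * s) + S ^ (8 * s)) :=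
    add_pow_le (Nat.cast_nonneg P) hS0 _
  have hS8 : S ^ (8 * s) ≤ (P : ℝ) ^ (4 * n) * U ^ 4 := by
    calc S ^ (8 * s) = (S ^ (2 * s)) ^ 4 := by rw [← pow_mul]; congr 1; ring
      _ ≤ ((P : ℝ) ^ n * U) ^ 4 := by gcongr
      _ = _ := by rw [mul_pow, ← pow_mul, mul_comm n 4]
  have hn' : 2 * s - 1 = n := by omega
  rw [hn']
  calc F ^ (2 * (8 * s)) = (F ^ 2) ^ (8 * s) := by rw [pow_mul]
    _ ≤ (2 * (P + S)) ^ (8 * s) := by gcongr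
    _ = 2 ^ (8 * s) * (P + S) ^ (8 * s) := by rw [mul_pow]
    _ ≤ 2 ^ (8 * s) * (2 ^ (8 * s - 1) * ((P : ℝ) ^ (8 * s) + (P : ℝ) ^ (4 * n) * U ^ 4)) := by
      gcongr
      exact h8.trans (by gcongr)
    _ = 2 ^ (8 * s + (8 * s - 1)) * ((P : ℝ) ^ (8 * s) + (P : ℝ) ^ (4 * n) * U ^ 4) := by
      rw [pow_add, mul_assoc]
    _ ≤ _ := by
      refine mul_le_mul_of_nonneg_right ?_ (by positivity)
      exact pow_le_pow_right₀ one_le_two (by omega)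

lemma norm_expSum_mul_pow_eq (s : Finset ℕ) (g : ℕ → ℕ) (h n Y : ℕ)
    (hY : ∀ x ∈ s, n * g x ≤ Y) (t : UnitAddCircle) :
    ((‖expSum s (fun x => (h : ℤ) * g x) t‖ ^ (2 * n) : ℝ) : ℂ) =
      ∑ y ∈ Icc (-(Y : ℤ)) Y,
        (#{z ∈ (Fintype.piFinset fun _ : Fin n => s) ×ˢ (Fintype.piFinset fun _ : Fin n => s) |
          ∑ i, (g (z.1 i) : ℤ) - ∑ i, (g (z.2 i) : ℤ) = y} : ℂ) * fourier (h * y) t := by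
  have hbound : ∀ x ∈ Fintype.piFinset fun _ : Fin n => s, ∑ i, (g (x i) : ℤ) ≤ Y := by
    intro x hx
    rcases Nat.eq_zero_or_pos n with rfl | hn
    · simp
    have : n * ∑ i, g (x i) ≤ n * Y := by
      rw [mul_sum]
      refine (sum_le_card_nsmul _ _ Y fun i _ => hY _ (Fintype.mem_piFinset.1 hx i)).trans ?_
      simp
    exact_mod_cast Nat.le_of_mul_le_mul_left this hn
  rw [norm_expSum_pow, expSum]
  rw [← sum_fiberwise_of_maps_to (t := Icc (-(Y : ℤ)) Y)
    (g := fun z => ∑ i, (g (z.1 i) : ℤ) - ∑ i, (g (z.2 i) : ℤ))]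
  · refine sum_congr rfl fun y _ => ?_
    rw [← nsmul_eq_mul]
    refine sum_eq_card_nsmul fun z hz => ?_
    rw [← (mem_filter.1 hz).2, mul_sub, mul_sum, mul_sum]
  · intro z hz
    rw [mem_product] at hz
    have h1 := hbound _ hz.1
    have h2 := hbound _ hz.2
    have h3 : 0 ≤ ∑ i, (g (z.1 i) : ℤ) := sum_nonneg fun _ _ => Int.natCast_nonneg _
    have h4 : 0 ≤ ∑ i, (g (z.2 i) : ℤ) := sum_nonneg fun _ _ => Int.natCast_nonneg _
    rw [mem_Icc]
    constructor <;> linarith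

open MeasureTheory AddCircle in
lemma integral_sum_norm_pow_four_le (P Y s : ℕ) (hPY : P ≤ Y) (g : ℕ → ℕ → ℕ) (R : ℝ)
    (hg : ∀ h ∈ Icc 1 P, ∀ x ∈ range (P + 1), s * g h x ≤ Y)
    (hR : ∀ h ∈ Icc 1 P,
      ∫ t, ‖expSum (range (P + 1)) (fun x => (g h x : ℤ)) t‖ ^ (2 * s) ∂haarAddCircle ≤ R) :
    ∫ t, (∑ h ∈ Icc 1 P,
      ‖expSum (range (P + 1 - h)) (fun x => (h : ℤ) * g h x) t‖ ^ (2 * s)) ^ 4 ∂haarAddCircle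
      ≤ R ^ 4 * (108 * (P * Y : ℝ) ^ 3) := by
  let w : ℕ × ℤ → ℝ := fun p =>
    #{z ∈ (Fintype.piFinset fun _ : Fin s => range (P + 1 - p.1)) ×ˢ
      (Fintype.piFinset fun _ : Fin s => range (P + 1 - p.1)) |
      ∑ i, (g p.1 (z.1 i) : ℤ) - ∑ i, (g p.1 (z.2 i) : ℤ) = p.2}
  have hsub : ∀ h, range (P + 1 - h) ⊆ range (P + 1) := fun h =>
    range_subset_range.2 (Nat.sub_le _ _)
  refine (integral_pow_four_le (Icc 1 P ×ˢ Icc (-(Y : ℤ)) Y) w (fun p => (p.1 : ℤ) * p.2) R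
    (fun p _ => Nat.cast_nonneg _) ?_ _ ?_).trans ?_
  · rintro ⟨h, y⟩ hp
    rw [mem_product] at hp
    refine le_trans ?_ (hR h hp.1)
    calc w (h, y) ≤ #{z ∈ (Fintype.piFinset fun _ : Fin s => range (P + 1)) ×ˢ
          (Fintype.piFinset fun _ : Fin s => range (P + 1)) |
          ∑ i, (g h (z.1 i) : ℤ) - ∑ i, (g h (z.2 i) : ℤ) = y} := by
          simp only [w, Nat.cast_le]
          refine card_le_card (filter_subset_filter _ (product_subset_product ?_ ?_)) <;>
          exact Fintype.piFinset_subset _ _ fun _ => hsub h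
      _ ≤ _ := card_filter_eq_le_integral _ _ y
      _ = _ := by
          refine integral_congr_ae (Filter.Eventually.of_forall fun t => ?_)
          simp only
          rw [← norm_expSum_pow (range (P + 1)) (fun x => (g h x : ℤ)), Complex.norm_real,
            Real.norm_of_nonneg (by positivity)]
  · intro t
    rw [sum_product, Complex.ofReal_sum]
    refine sum_congr rfl fun h hh => ?_
    rw [norm_expSum_mul_pow_eq _ _ _ _ Y fun x hx => hg h hh x (hsub h hx)]
    simp [w]
  · have hcount := card_sum_four_products_eq_zero_le P Y hPY _ rfl
    gcongr

open MeasureTheory AddCircle in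
lemma MomentBound.succ {k s : ℕ} (hk : 1 ≤ k) (hs : k + 1 ≤ 8 * s) (H : MomentBound k s) :
    MomentBound (k + 1) (8 * s) := by
  intro C
  obtain ⟨K, hK0, hK⟩ := H (2 ^ (k + 1) * C)
  set c : ℕ := s * (2 ^ (k + 1) * C) + 1 with hc
  refine ⟨2 ^ (16 * s + 3) * (1 + 108 * K ^ 4 * c ^ 3), by positivity, fun P hP a ha haC => ?_⟩
  have hP0 : (0 : ℝ) < P := by exact_mod_cast hP
  have hP1 : (1 : ℝ) ≤ P := by exact_mod_cast hP
  choose b hbk hb hbP using fun h => exists_polyVal_difference k a h ha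
  have hbC : ∀ h ∈ Icc 1 P, polyVal k (b h) P ≤ 2 ^ (k + 1) * C * P ^ k := by
    intro h hh
    refine Nat.le_of_mul_le_mul_left ?_ hP
    calc P * polyVal k (b h) P ≤ 2 ^ (k + 1) * polyVal (k + 1) a P := hbP h P (mem_Icc.1 hh).2
      _ ≤ 2 ^ (k + 1) * (C * P ^ (k + 1)) := by gcongr
      _ = P * (2 ^ (k + 1) * C * P ^ k) := by ring
  set Y : ℕ := c * P ^ k with hY
  have hPY : P ≤ Y := by
    calc P = 1 * P ^ 1 := by ring
      _ ≤ c * P ^ k := Nat.mul_le_mul (by omega) (Nat.pow_le_pow_right hP hk)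
  have hgY : ∀ h ∈ Icc 1 P, ∀ x ∈ range (P + 1), s * polyVal k (b h) x ≤ Y := by
    intro h hh x hx
    calc s * polyVal k (b h) x ≤ s * polyVal k (b h) P := by
          gcongr
          exact polyVal_mono k (b h) (Nat.lt_succ_iff.1 (mem_range.1 hx))
      _ ≤ s * (2 ^ (k + 1) * C * P ^ k) := by
          gcongr
          exact hbC h hh
      _ = s * (2 ^ (k + 1) * C) * P ^ k := by ring
      _ ≤ Y := Nat.mul_le_mul_right _ (Nat.le_succ _)
  set R : ℝ := K * (P : ℝ) ^ (2 * s) / (P : ℝ) ^ k with hR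
  have hU := integral_sum_norm_pow_four_le P Y s hPY (fun h => polyVal k (b h)) R hgY
    fun h hh => (le_div_iff₀ (by positivity)).2 (hK P hP (b h) (hbk h) (hbC h hh))
  set U : UnitAddCircle → ℝ := fun t => ∑ h ∈ Icc 1 P,
    ‖expSum (range (P + 1 - h)) (fun x => (h : ℤ) * polyVal k (b h) x) t‖ ^ (2 * s) with hUdef
  have hUcont : Continuous U := by fun_prop
  have hint : ∫ t, ‖expSum (range (P + 1)) (fun x => (polyVal (k + 1) a x : ℤ)) t‖ ^ (2 * (8 * s))
      ∂haarAddCircle ≤ 2 ^ (16 * s + 3) * ((P : ℝ) ^ (8 * s) +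
        (P : ℝ) ^ (4 * (2 * s - 1)) * (R ^ 4 * (108 * (P * Y : ℝ) ^ 3))) := by
    calc _ ≤ ∫ t, 2 ^ (16 * s + 3) * ((P : ℝ) ^ (8 * s) +
          (P : ℝ) ^ (4 * (2 * s - 1)) * U t ^ 4) ∂haarAddCircle := by
          refine integral_mono (Continuous.integrable_haarAddCircle (by fun_prop))
            (Continuous.integrable_haarAddCircle (by fun_prop)) fun t => ?_
          exact pow_add_sum_le P s (by omega) _ _ (fun h => norm_nonneg _)
            (norm_expSum_range_sq_le (polyVal (k + 1) a) (fun h => polyVal k (b h)) P hP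
              (fun h x => hb h x) t)
      _ = 2 ^ (16 * s + 3) * ((P : ℝ) ^ (8 * s) +
          (P : ℝ) ^ (4 * (2 * s - 1)) * ∫ t, U t ^ 4 ∂haarAddCircle) := by
          rw [integral_const_mul, integral_add (integrable_const _)
            (Continuous.integrable_haarAddCircle (by fun_prop)), integral_const_mul]
          simp
      _ ≤ _ := by gcongr
  obtain ⟨n, hn⟩ : ∃ n, 2 * s = n + 1 := ⟨2 * s - 1, by omega⟩
  have hmain : (P : ℝ) ^ (4 * n) * (R ^ 4 * (108 * (P * Y : ℝ) ^ 3)) * (P : ℝ) ^ (k + 1) =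
      108 * K ^ 4 * c ^ 3 * (P : ℝ) ^ (2 * (8 * s)) := by
    have e1 : (P : ℝ) ^ (2 * (8 * s)) = ((P : ℝ) ^ n * P) ^ 8 := by
      rw [← pow_succ, ← hn, ← pow_mul]
      congr 1
      ring
    rw [hR, hY, e1, hn]
    push_cast
    field_simp
    ring
  have hn' : 2 * s - 1 = n := by omega
  rw [hn'] at hint
  calc _ ≤ 2 ^ (16 * s + 3) * ((P : ℝ) ^ (8 * s) +
        (P : ℝ) ^ (4 * n) * (R ^ 4 * (108 * (P * Y : ℝ) ^ 3))) * (P : ℝ) ^ (k + 1) := by gcongr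
    _ = 2 ^ (16 * s + 3) * ((P : ℝ) ^ (8 * s + (k + 1)) +
        108 * K ^ 4 * c ^ 3 * (P : ℝ) ^ (2 * (8 * s))) := by
        rw [mul_assoc, add_mul, hmain, ← pow_add]
    _ ≤ 2 ^ (16 * s + 3) * ((P : ℝ) ^ (2 * (8 * s)) +
        108 * K ^ 4 * c ^ 3 * (P : ℝ) ^ (2 * (8 * s))) := by
        gcongr
        omega
    _ = _ := by ring

lemma exists_momentBound (k : ℕ) (hk : 1 ≤ k) : ∃ s, k ≤ s ∧ MomentBound k s := by
  induction k, hk using Nat.le_induction with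
  | base => exact ⟨1, le_rfl, momentBound_one⟩
  | succ k hk ih =>
    obtain ⟨s, hks, hs⟩ := ih
    exact ⟨8 * s, by omega, hs.succ hk (by omega)⟩

lemma exists_pow_le_card_image {k : ℕ} (hk : 1 ≤ k) : ∃ u ≥ 1, ∃ K : ℝ, 0 < K ∧
    ∀ P : ℕ, 1 ≤ P → (P : ℝ) ^ k ≤ K * #(image (fun x : Fin u → ℕ => ∑ i, x i ^ k)
      (Fintype.piFinset fun _ => range (P + 1))) := by
  obtain ⟨s, hs, H⟩ := exists_momentBound k hk
  obtain ⟨K, hK, H⟩ := H 1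
  refine ⟨2 * s, by omega, K + 1, by positivity, fun P hP => ?_⟩
  have hval : ∀ x, polyVal k (Pi.single k 1) x = x ^ k := fun x => by
    rw [polyVal, sum_eq_single k] <;> simp +contextual
  have hPk := H P hP (Pi.single k 1) (by simp) (by simp [hval])
  simp only [hval] at hPk
  set I := ∫ t, ‖expSum (range (P + 1)) (fun x => ((x ^ k : ℕ) : ℤ)) t‖ ^ (2 * s)
    ∂AddCircle.haarAddCircle with hI
  set A := Fintype.piFinset fun _ : Fin (2 * s) => range (P + 1) with hA
  set B := image (fun x : Fin (2 * s) → ℕ => ∑ i, x i ^ k) A with hB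
  have hfib : ∀ n ∈ B, (#{x ∈ A | ∑ i, x i ^ k = n} : ℝ) ≤ I := fun n _ => by
    have h := card_filter_eq_le_integral A (fun x => ∑ i, ((x i ^ k : ℕ) : ℤ)) n
    have hpow : ∀ t, ‖expSum A (fun x => ∑ i, ((x i ^ k : ℕ) : ℤ)) t‖ =
        ‖expSum (range (P + 1)) (fun x => ((x ^ k : ℕ) : ℤ)) t‖ ^ (2 * s) := fun t => by
      rw [← norm_pow, expSum_pow]
    simp only [hpow] at h
    simp only [← Nat.cast_sum, Nat.cast_inj] at h
    exact h
  have hcard : ((P : ℝ) + 1) ^ (2 * s) ≤ #B * I := by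
    have h1 : (#A : ℝ) = ((P : ℝ) + 1) ^ (2 * s) := by simp [hA]
    rw [← h1, card_eq_sum_card_image (fun x : Fin (2 * s) → ℕ => ∑ i, x i ^ k) A, Nat.cast_sum,
      ← nsmul_eq_mul]
    exact sum_le_card_nsmul _ _ _ hfib
  have hP0 : (0 : ℝ) < P := by exact_mod_cast hP
  refine le_of_mul_le_mul_left ?_ (pow_pos hP0 (2 * s))
  calc (P : ℝ) ^ (2 * s) * P ^ k ≤ (P + 1) ^ (2 * s) * P ^ k := by gcongr; linarith
    _ ≤ #B * I * P ^ k := by gcongr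
    _ = #B * (I * P ^ k) := by ring
    _ ≤ #B * (K * P ^ (2 * s)) := by gcongr
    _ ≤ #B * ((K + 1) * P ^ (2 * s)) := by gcongr; linarith
    _ = _ := by ring

open scoped Pointwise in
open Classical in
lemma card_add_mul_sub_le_card_add (A B : Set ℕ) (hA : 0 ∈ A) (hB : 0 ∈ B) (N : ℕ) :
    (#{n ∈ Ioc 0 N | n ∈ A} : ℝ) + schnirelmannDensity B * (N - #{n ∈ Ioc 0 N | n ∈ A}) ≤
      #{n ∈ Ioc 0 N | n ∈ A + B} := by
  induction N using Nat.strong_induction_on with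
  | _ N ih =>
  by_cases hne : ({n ∈ Ioc 0 N | n ∈ A} : Finset ℕ).Nonempty
  · obtain ⟨a, ha, hmax⟩ := exists_max_image _ id hne
    simp only [mem_filter, mem_Ioc, id, and_imp] at ha hmax
    obtain ⟨⟨ha0, haN⟩, haA⟩ := ha
    have hsplit : ({n ∈ Ioc 0 N | n ∈ A} : Finset ℕ) = insert a {n ∈ Ioc 0 (a - 1) | n ∈ A} := by
      ext n
      simp only [mem_filter, mem_Ioc, mem_insert]
      constructor
      · rintro ⟨⟨h0, h1⟩, h2⟩
        have := hmax n h0 h1 h2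
        by_cases hna : n = a
        · exact Or.inl hna
        · exact Or.inr ⟨⟨h0, by omega⟩, h2⟩
      · rintro (rfl | ⟨⟨h0, h1⟩, h2⟩)
        · exact ⟨⟨ha0, haN⟩, haA⟩
        · exact ⟨⟨h0, by omega⟩, h2⟩
    have hcard : #{n ∈ Ioc 0 N | n ∈ A} = #{n ∈ Ioc 0 (a - 1) | n ∈ A} + 1 := by
      rw [hsplit, card_insert_of_notMem]
      simp only [mem_filter, mem_Ioc]
      omega
    have hsum : #{n ∈ Ioc 0 (a - 1) | n ∈ A + B} + 1 + #{n ∈ Ioc 0 (N - a) | n ∈ B} ≤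
        #{n ∈ Ioc 0 N | n ∈ A + B} := by
      rw [← card_insert_of_notMem (a := a) (s := {n ∈ Ioc 0 (a - 1) | n ∈ A + B})
        (by simp only [mem_filter, mem_Ioc]; omega),
        ← card_image_of_injective {n ∈ Ioc 0 (N - a) | n ∈ B} (add_right_injective a),
        ← card_union_of_disjoint]
      · refine card_le_card fun n hn => ?_
        simp only [mem_union, mem_insert, mem_filter, mem_Ioc, mem_image] at hn ⊢
        rcases hn with (rfl | ⟨⟨h0, h1⟩, h2⟩) | ⟨b, ⟨⟨h0, h1⟩, h2⟩, rfl⟩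
        · exact ⟨⟨ha0, haN⟩, Set.mem_add.2 ⟨n, haA, 0, hB, add_zero n⟩⟩
        · exact ⟨⟨h0, by omega⟩, h2⟩
        · exact ⟨⟨by omega, by omega⟩, Set.add_mem_add haA h2⟩
      · rw [disjoint_left]
        intro n hn hn'
        simp only [mem_insert, mem_filter, mem_Ioc, mem_image] at hn hn'
        obtain ⟨b, ⟨⟨h0, h1⟩, h2⟩, rfl⟩ := hn'
        rcases hn with h | ⟨⟨h3, h4⟩, h5⟩ <;> omega
    have hB' := schnirelmannDensity_mul_le_card_filter (A := B) (n := N - a)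
    have h1 := ih (a - 1) (by omega)
    have hsum' : (#{n ∈ Ioc 0 (a - 1) | n ∈ A + B} + 1 + #{n ∈ Ioc 0 (N - a) | n ∈ B} : ℝ) ≤
        #{n ∈ Ioc 0 N | n ∈ A + B} := by exact_mod_cast hsum
    rw [Nat.cast_sub haN] at hB'
    rw [Nat.cast_sub ha0, Nat.cast_one] at h1
    rw [hcard]
    push_cast
    linarith
  · rw [not_nonempty_iff_eq_empty.1 hne]
    simp only [card_empty, Nat.cast_zero, zero_add, sub_zero]
    refine schnirelmannDensity_mul_le_card_filter.trans (Nat.cast_le.2 (card_le_card ?_))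
    intro n hn
    simp only [mem_filter] at hn ⊢
    exact ⟨hn.1, Set.mem_add.2 ⟨0, hA, n, hn.2, zero_add n⟩⟩

open scoped Pointwise in
open Classical in
/-- Schnirelmann's inequality for the density of a sumset. -/
lemma one_sub_schnirelmannDensity_add_le (A B : Set ℕ) (hA : 0 ∈ A) (hB : 0 ∈ B) :
    1 - schnirelmannDensity (A + B) ≤
      (1 - schnirelmannDensity A) * (1 - schnirelmannDensity B) := by
  suffices h : schnirelmannDensity A + schnirelmannDensity B * (1 - schnirelmannDensity A) ≤
      schnirelmannDensity (A + B) by linarith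
  rw [le_schnirelmannDensity_iff]
  intro n hn
  rw [le_div_iff₀ (by exact_mod_cast hn.bot_lt)]
  refine le_trans ?_ (card_add_mul_sub_le_card_add A B hA hB n)
  have h1 := schnirelmannDensity_mul_le_card_filter (A := A) (n := n)
  have h2 : schnirelmannDensity B ≤ 1 := schnirelmannDensity_le_one
  nlinarith

/-- The sums of `u` nonnegative `k`-th powers. -/
def powerSums (k u : ℕ) : Set ℕ := {n | ∃ x : Fin u → ℕ, ∑ i, x i ^ k = n}

lemma zero_mem_powerSums {k : ℕ} (hk : k ≠ 0) (u : ℕ) : 0 ∈ powerSums k u :=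
  ⟨fun _ => 0, by simp [hk]⟩

lemma add_mem_powerSums {k u v m n : ℕ} (hm : m ∈ powerSums k u) (hn : n ∈ powerSums k v) :
    m + n ∈ powerSums k (u + v) := by
  obtain ⟨x, rfl⟩ := hm
  obtain ⟨y, rfl⟩ := hn
  exact ⟨Fin.append x y, by simp [Fin.sum_univ_add]⟩

open scoped Pointwise in
lemma powerSums_add_subset (k u v : ℕ) :
    powerSums k u + powerSums k v ⊆ powerSums k (u + v) := by
  rintro _ ⟨m, hm, n, hn, rfl⟩
  exact add_mem_powerSums hm hn

open Classical in
lemma one_sub_schnirelmannDensity_powerSums_le {k : ℕ} (hk : k ≠ 0) (u n : ℕ) :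
    1 - schnirelmannDensity (powerSums k (n * u)) ≤
      (1 - schnirelmannDensity (powerSums k u)) ^ n := by
  induction n with
  | zero =>
    have : 0 ≤ schnirelmannDensity (powerSums k (0 * u)) := schnirelmannDensity_nonneg
    rw [pow_zero]
    linarith
  | succ n ih =>
    have h1 : schnirelmannDensity (powerSums k u) ≤ 1 := schnirelmannDensity_le_one
    rw [add_one_mul, pow_succ]
    calc _ ≤ _ := sub_le_sub_left
          (schnirelmannDensity_le_of_subset (powerSums_add_subset k (n * u) u)) 1
      _ ≤ _ := one_sub_schnirelmannDensity_add_le _ _ (zero_mem_powerSums hk _)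
          (zero_mem_powerSums hk _)
      _ ≤ _ := mul_le_mul_of_nonneg_right ih (by linarith)

open Classical in
lemma exists_powerSums_eq_univ {k u : ℕ} (hk : k ≠ 0)
    (hu : 0 < schnirelmannDensity (powerSums k u)) : ∃ s, powerSums k s = Set.univ := by
  have h1 : schnirelmannDensity (powerSums k u) ≤ 1 := schnirelmannDensity_le_one
  obtain ⟨n, hn⟩ := exists_pow_lt_of_lt_one (show (0 : ℝ) < 1 / 2 by norm_num)
    (show 1 - schnirelmannDensity (powerSums k u) < 1 by linarith)
  have h2 := one_sub_schnirelmannDensity_powerSums_le hk u n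
  refine ⟨n * u + n * u, Set.univ_subset_iff.1 ?_⟩
  rw [← add_eq_univ_of_one_le_schirelmannDensity_add_schnirelmannDensity
    (zero_mem_powerSums hk (n * u)) (zero_mem_powerSums hk (n * u)) (by linarith)]
  exact powerSums_add_subset k _ _

open Classical in
lemma schnirelmannDensity_powerSums_pos {k u : ℕ} (hk : k ≠ 0) (hu : 1 ≤ u) {K : ℝ} (hK : 0 < K)
    (H : ∀ P : ℕ, 1 ≤ P → (P : ℝ) ^ k ≤ K * #(image (fun x : Fin u → ℕ => ∑ i, x i ^ k)
      (Fintype.piFinset fun _ => range (P + 1)))) :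
    0 < schnirelmannDensity (powerSums k u) := by
  have hc : (0 : ℝ) < u + u * 2 ^ (k + 1) * K := by positivity
  refine lt_of_lt_of_le (inv_pos.2 hc) (le_schnirelmannDensity_iff.2 fun N hN => ?_)
  rw [le_div_iff₀ (by exact_mod_cast hN.bot_lt), inv_mul_le_iff₀ hc]
  have hone : (1 : ℝ) ≤ #{n ∈ Ioc 0 N | n ∈ powerSums k u} := by
    rw [Nat.one_le_cast, Nat.one_le_iff_ne_zero, card_ne_zero]
    refine ⟨1, mem_filter.2 ⟨mem_Ioc.2 ⟨one_pos, by omega⟩, Pi.single ⟨0, hu⟩ 1, ?_⟩⟩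
    rw [sum_eq_single (⟨0, hu⟩ : Fin u)] <;> simp +contextual [hk]
  obtain hNu | hNu := lt_or_ge N u
  · have h1 : (N : ℝ) ≤ u := by exact_mod_cast hNu.le
    have h2 : (u : ℝ) + 0 ≤ u + u * 2 ^ (k + 1) * K := by gcongr; positivity
    nlinarith
  have hbdd : ∀ P, u * P ^ k ≤ N → P ≤ N := fun P hP =>
    (Nat.le_self_pow hk P).trans ((Nat.le_mul_of_pos_left _ hu).trans hP)
  have h1N : 1 ≤ N := by omega
  obtain ⟨P, hP1, hPN, hNP⟩ : ∃ P, 1 ≤ P ∧ u * P ^ k ≤ N ∧ N < u * (P + 1) ^ k := by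
    refine ⟨Nat.findGreatest (fun P => u * P ^ k ≤ N) N, ?_, ?_, ?_⟩
    · exact Nat.le_findGreatest h1N (by simpa using hNu)
    · exact Nat.findGreatest_spec (P := fun P => u * P ^ k ≤ N) h1N (by simpa using hNu)
    · by_contra! h
      exact absurd (Nat.le_findGreatest (P := fun P => u * P ^ k ≤ N) (hbdd _ h) h) (by simp)
  have himg : #(image (fun x : Fin u → ℕ => ∑ i, x i ^ k)
      (Fintype.piFinset fun _ => range (P + 1))) ≤ #{n ∈ Ioc 0 N | n ∈ powerSums k u} + 1 := by
    refine (card_le_card ?_).trans (card_insert_le 0 _)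
    intro n hn
    obtain ⟨x, hx, rfl⟩ := mem_image.1 hn
    simp only [mem_insert, mem_filter, mem_Ioc]
    refine or_iff_not_imp_left.2 fun h0 => ⟨⟨Nat.pos_of_ne_zero h0, le_trans ?_ hPN⟩, x, rfl⟩
    calc ∑ i, x i ^ k ≤ ∑ _i : Fin u, P ^ k := sum_le_sum fun i _ =>
          Nat.pow_le_pow_left (Nat.lt_succ_iff.1 (mem_range.1 (Fintype.mem_piFinset.1 hx i))) k
      _ = u * P ^ k := by simp
  have himg' : (#(image (fun x : Fin u → ℕ => ∑ i, x i ^ k)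
      (Fintype.piFinset fun _ => range (P + 1))) : ℝ) ≤
        2 * #{n ∈ Ioc 0 N | n ∈ powerSums k u} := by
    have : (#(image (fun x : Fin u → ℕ => ∑ i, x i ^ k)
      (Fintype.piFinset fun _ => range (P + 1))) : ℝ) ≤
        #{n ∈ Ioc 0 N | n ∈ powerSums k u} + 1 := by exact_mod_cast himg
    linarith
  have hP1' : (1 : ℝ) ≤ P := by exact_mod_cast hP1
  calc (N : ℝ) ≤ u * (P + 1) ^ k := by exact_mod_cast hNP.le
    _ ≤ u * (2 * P) ^ k := by gcongr; linarith
    _ = u * 2 ^ k * P ^ k := by ring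
    _ ≤ u * 2 ^ k * (K * (2 * #{n ∈ Ioc 0 N | n ∈ powerSums k u})) := by
        gcongr
        exact (H P hP1).trans (by gcongr)
    _ = 0 + u * 2 ^ (k + 1) * K * #{n ∈ Ioc 0 N | n ∈ powerSums k u} := by ring
    _ ≤ u * #{n ∈ Ioc 0 N | n ∈ powerSums k u} +
        u * 2 ^ (k + 1) * K * #{n ∈ Ioc 0 N | n ∈ powerSums k u} := by gcongr; positivity
    _ = _ := by ring

lemma isRepr_add {m n i j k : ℕ} (hm : IsRepr m i k) (hn : IsRepr n j k) :
    IsRepr (m + n) (i + j) k := by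
  obtain ⟨x, hx, rfl⟩ := hm
  obtain ⟨y, hy, rfl⟩ := hn
  refine ⟨Fin.append x y, fun l => ?_, by simp [Fin.sum_univ_add]⟩
  refine Fin.addCases (fun i => ?_) (fun i => ?_) l
  · simpa using hx i
  · simpa using hy i

lemma isRepr_mul_pow {a : ℕ} (ha : 0 < a) (j k : ℕ) : IsRepr (j * a ^ k) j k :=
  ⟨fun _ => a, fun _ => ha, by simp⟩

lemma exists_isRepr_of_mem_powerSums {k s n : ℕ} (hk : k ≠ 0) (hn : n ∈ powerSums k s) :
    ∃ m ≤ s, IsRepr n m k := by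
  induction s generalizing n with
  | zero =>
    obtain ⟨x, hx⟩ := hn
    exact ⟨0, le_rfl, Fin.elim0, fun i => i.elim0, by simpa using hx⟩
  | succ s ih =>
    obtain ⟨x, rfl⟩ := hn
    rw [Fin.sum_univ_succ]
    obtain ⟨m, hm, hr⟩ := ih ⟨fun i => x i.succ, rfl⟩
    obtain h0 | h0 := Nat.eq_zero_or_pos (x 0)
    · exact ⟨m, by omega, by simpa [h0, hk] using hr⟩
    · exact ⟨1 + m, by omega, by simpa using isRepr_add (isRepr_mul_pow h0 1 k) hr⟩

/-- A single integer which is a sum of exactly `j` positive `k`-th powers for every `j` in a block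
of `s + 1` consecutive values. -/
lemma exists_isRepr_block {k : ℕ} (hk : 2 ≤ k) (s : ℕ) :
    ∃ T L : ℕ, ∀ m ≤ s, IsRepr T (L + m) k := by
  obtain ⟨p, hp⟩ : ∃ p, 2 ^ k = p + 1 := ⟨2 ^ k - 1, by have := Nat.one_le_two_pow (n := k); omega⟩
  have hp1 : 1 < p := by
    have := Nat.pow_le_pow_right two_pos hk
    omega
  have hp0 : 0 < p := by omega
  obtain ⟨q, hq⟩ : ∃ q, p ^ k = q + 1 := ⟨p ^ k - 1, by have := Nat.pow_pos (n := k) hp0; omega⟩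
  have hcop : p.gcd q = 1 := by
    have h1 : p.gcd q ∣ q + 1 :=
      hq ▸ (Nat.gcd_dvd_left p q).trans (dvd_pow_self p (by omega))
    exact Nat.dvd_one.1 ((Nat.dvd_add_right (Nat.gcd_dvd_right p q)).1 h1)
  set F := p * q with hF
  set M := F + s with hM
  refine ⟨M * 2 ^ k + M * p ^ k, 2 * M + F, fun m hm => ?_⟩
  obtain ⟨a, b, hab⟩ := Nat.exists_add_mul_eq_of_gcd_dvd_of_mul_pred_le p q (F + m)
    (by simp [hcop]) ((Nat.mul_le_mul (Nat.pred_le p) (Nat.pred_le q)).trans (by omega))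
  have hq0 : 0 < q := by
    have := Nat.one_lt_pow (by omega : k ≠ 0) hp1
    omega
  have haM : a ≤ M := (Nat.le_mul_of_pos_right a hp0).trans (by omega)
  have hbM : b ≤ M := (Nat.le_mul_of_pos_right b hq0).trans (by omega)
  obtain ⟨a', ha'⟩ := Nat.exists_eq_add_of_le haM
  obtain ⟨b', hb'⟩ := Nat.exists_eq_add_of_le hbM
  have h := isRepr_add
    (isRepr_add (isRepr_mul_pow one_pos (a * (p + 1)) k) (isRepr_mul_pow two_pos a' k))
    (isRepr_add (isRepr_mul_pow one_pos (b * (q + 1)) k) (isRepr_mul_pow hp0 b' k))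
  convert h using 1
  · rw [one_pow, ← hp, ← hq]
    nth_rewrite 1 [ha']
    rw [hb']
    ring
  · rw [add_assoc (2 * M), ← hab]
    linear_combination ha' + hb'

end Waring

/-- for every `k ≥ 2` there is a positive integer `J` such that for all
`j ≥ J`, the set of positive integers that are not `(j,k)`-representable is finite. -/
theorem stmt_2 (k : ℕ) (hk : 2 ≤ k) :
    ∃ J : ℕ, 0 < J ∧ ∀ j : ℕ, J ≤ j →
      {n : ℕ | 0 < n ∧ ¬ IsRepr n j k}.Finite := by
  obtain ⟨u, hu, K, hK, H⟩ := Waring.exists_pow_le_card_image (by omega : 1 ≤ k)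
  obtain ⟨s, hs⟩ := Waring.exists_powerSums_eq_univ (by omega : k ≠ 0)
    (Waring.schnirelmannDensity_powerSums_pos (by omega) hu hK H)
  obtain ⟨T, L, hT⟩ := Waring.exists_isRepr_block hk s
  refine ⟨L + s + 1, by omega, fun j hj => (Set.finite_lt_nat (T + (j - (L + s)))).subset ?_⟩
  rintro n ⟨-, hn⟩
  by_contra! hlt
  simp only [Set.mem_ofPred_eq, not_lt] at hlt
  obtain ⟨m, hm, hr⟩ := Waring.exists_isRepr_of_mem_powerSums (by omega : k ≠ 0)
    (hs ▸ Set.mem_univ (n - (T + (j - (L + s)))))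
  have := Waring.isRepr_add (Waring.isRepr_add hr (hT (s - m) (by omega)))
    (Waring.isRepr_mul_pow one_pos (j - (L + s)) k)
  rw [one_pow, mul_one] at this
  refine hn ?_
  convert this using 1 <;> omega
end

section
/- Let B³ = {1, 2, 3, 4, 5, 6, 8, 9, 10, 11, 12, 13, 15, 16, 17, 18, 19, 20, 22, 23, 24, 25, 27, 29, 30, 31, 32, 34, 36, 37, 38, 39, 41, 43, 44, 45, 46, 48, 50, 51, 53, 55, 57, 58, 60, 62, 64, 65, 67, 69, 71, 72, 74, 76, 79, 81, 83, 86, 88, 90, 93, 95, 97, 100, 102, 107, 109, 114, 116, 121, 123, 128, 135, 142, 149}. Then for every integer j ≥ 14, every integer n with n ≥ j and n − j ∉ B³ is the sum of exactly j positive cubes. -/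
/-- Zenkin's set `B³`. -/
def B3 : Finset ℕ :=
  {1, 2, 3, 4, 5, 6, 8, 9, 10, 11, 12, 13, 15, 16, 17, 18, 19, 20, 22, 23, 24, 25, 27,
   29, 30, 31, 32, 34, 36, 37, 38, 39, 41, 43, 44, 45, 46, 48, 50, 51, 53, 55, 57,
   58, 60, 62, 64, 65, 67, 69, 71, 72, 74, 76, 79, 81, 83, 86, 88, 90, 93, 95, 97,
   100, 102, 107, 109, 114, 116, 121, 123, 128, 135, 142, 149}

theorem IsRepr.add_pow {n j k a : ℕ} (h : IsRepr n j k) (ha : 0 < a) :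
    IsRepr (n + a ^ k) (j + 1) k := by
  obtain ⟨f, hf, rfl⟩ := h
  refine ⟨Fin.cons a f, fun i => ?_, by simp [Fin.sum_univ_succ, add_comm]⟩
  cases i using Fin.cases <;> simp [ha, hf]

theorem isRepr_zero (k : ℕ) : IsRepr 0 0 k :=
  ⟨Fin.elim0, fun i => i.elim0, by simp⟩

theorem IsRepr.add_of_le {m s t k : ℕ} (h : IsRepr (m + s) s k) (hst : s ≤ t) :
    IsRepr (m + t) t k := by
  induction t, hst using Nat.le_induction with
  | base => exact h
  | succ t _ ih => simpa [add_assoc] using ih.add_pow one_pos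

theorem exists_le_lt_succ {f : ℕ → ℕ} {q A : ℕ} (h₁ : f 1 ≤ q) (hA : q < f (A + 1)) :
    ∃ a, 0 < a ∧ a ≤ A ∧ f a ≤ q ∧ q < f (a + 1) := by
  induction A with
  | zero => exact absurd hA h₁.not_gt
  | succ A ih =>
    rcases lt_or_ge q (f (A + 1)) with h | h
    · obtain ⟨a, ha, hle, hfa⟩ := ih h
      exact ⟨a, ha, hle.trans A.le_succ, hfa⟩
    · exact ⟨A + 1, A.succ_pos, le_rfl, h, hA⟩

/-! ### Small integers -/

/-- The union of the translates by `a ^ 3 - 1`, for `1 ≤ a ≤ b`, of the set encoded by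
the binary digits of `R`. -/
def shiftUnion (R : ℕ) : ℕ → ℕ
  | 0 => 0
  | b + 1 => shiftUnion R b ||| R <<< ((b + 1) ^ 3 - 1)

/-- A bit mask of integers `m < 10000` such that `m + s` is a sum of `s` positive cubes. -/
def cubeMask : ℕ → ℕ
  | 0 => 1
  | s + 1 => shiftUnion (cubeMask s) 21 % 2 ^ 10000

theorem exists_of_testBit_shiftUnion {R b m : ℕ} (h : (shiftUnion R b).testBit m) :
    ∃ a, 0 < a ∧ a ^ 3 - 1 ≤ m ∧ R.testBit (m - (a ^ 3 - 1)) := by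
  induction b with
  | zero => simp [shiftUnion] at h
  | succ b ih =>
    simp only [shiftUnion, Nat.testBit_or, Nat.testBit_shiftLeft, Bool.or_eq_true,
      Bool.and_eq_true, decide_eq_true_eq] at h
    rcases h with h | ⟨h₁, h₂⟩
    · exact ih h
    · exact ⟨b + 1, b.succ_pos, h₁, h₂⟩

set_option exponentiation.threshold 10000 in
theorem isRepr_of_testBit_cubeMask {s m : ℕ} (h : (cubeMask s).testBit m) :
    IsRepr (m + s) s 3 := by
  induction s generalizing m with
  | zero =>
    obtain rfl : m = 0 := by simpa [cubeMask, Nat.testBit_one_eq_true_iff_self_eq_zero] using h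
    exact isRepr_zero 3
  | succ s ih =>
    rw [cubeMask, Nat.testBit_mod_two_pow, Bool.and_eq_true] at h
    obtain ⟨a, ha, hle, ht⟩ := exists_of_testBit_shiftUnion h.2
    convert (ih ht).add_pow ha using 1
    have := Nat.one_le_pow 3 a ha
    omega

theorem isRepr_of_cubeMask_shiftRight {s L d m : ℕ} (h : cubeMask s >>> L = 2 ^ d - 1)
    (h₁ : L ≤ m) (h₂ : m < L + d) : IsRepr (m + s) s 3 := by
  apply isRepr_of_testBit_cubeMask
  obtain ⟨i, rfl⟩ := Nat.exists_eq_add_of_le h₁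
  rw [← Nat.testBit_shiftRight, h, Nat.testBit_two_pow_sub_one]
  exact decide_eq_true (by omega)

theorem cubeMask_eight : cubeMask 8 >>> 613 = 2 ^ 9387 - 1 := by
  decide +kernel

theorem cubeMask_fourteen : cubeMask 14 >>> 150 = 2 ^ 9850 - 1 := by
  decide +kernel

theorem testBit_cubeMask_fourteen : ∀ m < 150, m ∉ B3 → (cubeMask 14).testBit m := by
  decide +kernel

/-- Subtracting the largest admissible cube extends an interval of representable integers. -/
theorem isRepr_extend {s L U A : ℕ} (h : ∀ m, L ≤ m → m < U → IsRepr (m + s) s 3)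
    (hA : L + 3 * A ^ 2 + 3 * A < U) {m : ℕ} (h₁ : L ≤ m) (h₂ : m + 1 < L + (A + 1) ^ 3) :
    IsRepr (m + (s + 1)) (s + 1) 3 := by
  obtain ⟨a, ha, haA, hl, hu⟩ :=
    exists_le_lt_succ (f := fun a => L + a ^ 3) (q := m + 1) (by simpa using h₁) h₂
  have hsq : a ^ 2 ≤ A ^ 2 := Nat.pow_le_pow_left haA 2
  have hexp : (a + 1) ^ 3 = a ^ 3 + 3 * a ^ 2 + 3 * a + 1 := by ring
  convert (h (m + 1 - a ^ 3) (by omega) (by omega)).add_pow ha using 1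
  omega

theorem isRepr_fourteen_of_lt {m : ℕ} (h : m ∉ B3) (hm : m < 10 ^ 28) :
    IsRepr (m + 14) 14 3 := by
  rcases lt_or_ge m 150 with hlt | hge
  · exact isRepr_of_testBit_cubeMask (testBit_cubeMask_fourteen m hlt h)
  rcases lt_or_ge m 613 with hlt | hge
  · exact isRepr_of_cubeMask_shiftRight cubeMask_fourteen hge (by omega)
  have h₈ : ∀ m, 613 ≤ m → m < 10000 → IsRepr (m + 8) 8 3 := fun m =>
    isRepr_of_cubeMask_shiftRight cubeMask_eight
  have h₉ : ∀ m, 613 ≤ m → m < 16 * 10 ^ 4 → IsRepr (m + 9) 9 3 := fun m h₁ h₂ =>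
    isRepr_extend (A := 54) h₈ (by norm_num) h₁ (by omega)
  have h₁₀ : ∀ m, 613 ≤ m → m < 8 * 10 ^ 6 → IsRepr (m + 10) 10 3 := fun m h₁ h₂ =>
    isRepr_extend (A := 200) h₉ (by norm_num) h₁ (by omega)
  have h₁₁ : ∀ m, 613 ≤ m → m < 4 * 10 ^ 9 → IsRepr (m + 11) 11 3 := fun m h₁ h₂ =>
    isRepr_extend (A := 1600) h₁₀ (by norm_num) h₁ (by omega)
  have h₁₂ : ∀ m, 613 ≤ m → m < 4 * 10 ^ 13 → IsRepr (m + 12) 12 3 := fun m h₁ h₂ =>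
    isRepr_extend (A := 36000) h₁₁ (by norm_num) h₁ (by omega)
  have h₁₃ : ∀ m, 613 ≤ m → m < 4 * 10 ^ 19 → IsRepr (m + 13) 13 3 := fun m h₁ h₂ =>
    isRepr_extend (A := 36 * 10 ^ 5) h₁₂ (by norm_num) h₁ (by omega)
  exact isRepr_extend (A := 36 * 10 ^ 8) h₁₃ (by norm_num) hge (by omega)

/-! ### Large integers -/

theorem IsRepr.add {m n i j k : ℕ} (hm : IsRepr m i k) (hn : IsRepr n j k) :
    IsRepr (m + n) (i + j) k := by
  obtain ⟨f, hf, rfl⟩ := hm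
  obtain ⟨g, hg, rfl⟩ := hn
  refine ⟨Fin.append f g, fun i => ?_, by simp [Fin.sum_univ_add]⟩
  cases i using Fin.addCases <;> simp [hf, hg]

theorem isRepr_two_symmetric {a x : ℕ} (hx : x < a) :
    IsRepr (2 * a ^ 3 + 6 * a * x ^ 2) 2 3 := by
  obtain ⟨d, rfl⟩ := Nat.exists_eq_add_of_lt hx
  convert ((isRepr_zero 3).add_pow (Nat.succ_pos d)).add_pow
    (show 0 < x + d + 1 + x by omega) using 1
  push_cast [Nat.succ_eq_add_one]
  ring

theorem isRepr_eight_symmetric {a t : ℕ} (ht : t < a ^ 2) :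
    IsRepr (8 * a ^ 3 + 6 * a * t) 8 3 := by
  obtain ⟨x, y, z, w, rfl⟩ := Nat.sum_four_squares t
  have key : ∀ u, u ^ 2 < a ^ 2 → IsRepr (2 * a ^ 3 + 6 * a * u ^ 2) 2 3 := fun u hu =>
    isRepr_two_symmetric (lt_of_pow_lt_pow_left₀ 2 a.zero_le hu)
  convert (((key x (by omega)).add (key y (by omega))).add (key z (by omega))).add
    (key w (by omega)) using 1
  ring

/-- Every odd integer is a cube modulo every power of two. -/
theorem exists_two_pow_dvd_cube_sub {r : ℤ} (hr : Odd r) (K : ℕ) :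
    ∃ y : ℤ, (2 : ℤ) ^ (K + 1) ∣ y ^ 3 - r := by
  induction K with
  | zero => exact ⟨1, by simpa using (odd_one.sub_odd hr).two_dvd⟩
  | succ K ih =>
    obtain ⟨y, c, hc⟩ := ih
    have hy : Odd y := by
      have : Odd (y ^ 3) := by
        rw [sub_eq_iff_eq_add.1 hc, pow_succ']
        exact Even.add_odd ⟨2 ^ K * c, by ring⟩ hr
      exact (Int.odd_pow.1 this).resolve_right (by norm_num)
    rcases Int.even_or_odd' c with ⟨d, rfl | rfl⟩
    · exact ⟨y, d, by rw [hc]; ring⟩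
    · obtain ⟨z, rfl⟩ := hy
      refine ⟨2 * z + 1 + 2 ^ (K + 1),
        d + 2 + 6 * z ^ 2 + 6 * z + 3 * (2 * z + 1) * 2 ^ K + 2 ^ K * 2 ^ (K + 1), ?_⟩
      linear_combination hc

/-- Every odd integer is a cube modulo `3 * 2 ^ K`. -/
theorem exists_cube_modEq {r : ℤ} (hr : Odd r) (K : ℕ) :
    ∃ y : ℕ, 0 < y ∧ y ≤ 3 * 2 ^ (K + 1) ∧ (3 * 2 ^ (K + 1) : ℤ) ∣ r - (y : ℤ) ^ 3 := by
  obtain ⟨y, hy⟩ := exists_two_pow_dvd_cube_sub hr K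
  have hcop : IsCoprime (3 : ℤ) (2 ^ (K + 1)) :=
    IsCoprime.pow_right ⟨1, -1, by norm_num⟩
  obtain ⟨u, v, huv⟩ := hcop
  set M : ℤ := 3 * 2 ^ (K + 1)
  have hMpos : 0 < M := by positivity
  have hdvd : M ∣ r - (y + 2 ^ (K + 1) * v * (r - y)) ^ 3 := by
    refine IsCoprime.mul_dvd ⟨u, v, huv⟩ ?_ ?_
    · have h₁ : y + 2 ^ (K + 1) * v * (r - y) = r + 3 * (-u * (r - y)) := by
        linear_combination (r - y) * huv
      have h₂ : (3 : ℤ) ∣ r - r ^ 3 := by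
        rw [Int.dvd_iff_emod_eq_zero]
        have h3 : r % 3 = 0 ∨ r % 3 = 1 ∨ r % 3 = 2 := by omega
        rcases h3 with h | h | h <;> simp [Int.sub_emod, pow_succ, Int.mul_emod, h]
      rw [h₁]
      obtain ⟨e, he⟩ := h₂
      exact ⟨e - 3 * r ^ 2 * (-u * (r - y)) - 9 * r * (-u * (r - y)) ^ 2
        - 9 * (-u * (r - y)) ^ 3, by linear_combination he⟩
    · obtain ⟨e, he⟩ := hy
      set q := v * (r - y)
      exact ⟨-e - 3 * y ^ 2 * q - 3 * y * 2 ^ (K + 1) * q ^ 2 - (2 ^ (K + 1)) ^ 2 * q ^ 3, by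
        simp only [q]; linear_combination -he⟩
  set y₀ := y + 2 ^ (K + 1) * v * (r - y)
  have hnonneg := Int.emod_nonneg (y₀ - 1) hMpos.ne'
  refine ⟨((y₀ - 1) % M + 1).toNat, ?_, ?_, ?_⟩
  · omega
  · have := Int.emod_lt_of_pos (y₀ - 1) hMpos
    zify
    rw [Int.toNat_of_nonneg (by omega)]
    omega
  · rw [Int.toNat_of_nonneg (by omega)]
    have h₁ : M ∣ y₀ - ((y₀ - 1) % M + 1) := by
      rw [show y₀ - ((y₀ - 1) % M + 1) = (y₀ - 1) - (y₀ - 1) % M by ring]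
      exact Int.dvd_self_sub_emod
    have h₂ := h₁.trans (sub_dvd_pow_sub_pow y₀ ((y₀ - 1) % M + 1) 3)
    simpa using dvd_add hdvd h₂

/-- Every sufficiently large odd integer is a sum of ten positive cubes: for `a = 8 ^ l`, eight
of them represent `8 * a ^ 3 + 6 * a * t`, one adjusts the residue modulo `6 * a`, and the cube
of a multiple of `6 * 2 ^ l` adjusts the size. -/
theorem isRepr_ten_of_odd {n : ℕ} (hn : Odd n) (hlarge : 10 ^ 27 ≤ n) : IsRepr n 10 3 := by
  obtain ⟨l, hl₁, hl₂⟩ := exists_nat_pow_near (x := n / 440) (y := 512) (by omega) (by norm_num)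
  rw [Nat.le_div_iff_mul_le (by norm_num)] at hl₁
  rw [Nat.div_lt_iff_lt_mul (by norm_num), pow_succ] at hl₂
  obtain ⟨a, ha⟩ : ∃ a, a = 8 ^ l := ⟨_, rfl⟩
  have ha3 : 512 ^ l = a ^ 3 := by rw [ha, ← pow_mul, mul_comm, pow_mul]; norm_num
  rw [ha3] at hl₁ hl₂
  have ha_large : 8 ^ 7 * 7 ≤ a := by
    by_contra! hlt
    have := Nat.pow_le_pow_left hlt.le 3
    norm_num at this hlarge
    omega
  have h2 : 3 * 2 ^ (3 * l + 1) = 6 * a := by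
    rw [ha, pow_succ, pow_mul]; norm_num; ring
  have hodd : Odd ((n : ℤ) - 8 * a ^ 3) :=
    (Int.odd_coe_nat n |>.2 hn).sub_even ⟨4 * a ^ 3, by ring⟩
  obtain ⟨y, hy, hyle, hdvd⟩ := exists_cube_modEq hodd (3 * l)
  rw [h2] at hyle
  have hdvd' : ((6 * a : ℕ) : ℤ) ∣ (n : ℤ) - 8 * a ^ 3 - y ^ 3 := by
    rw [← h2]; exact_mod_cast hdvd
  obtain ⟨q', hq'⟩ := hdvd'
  have hy3 : y ^ 3 ≤ 216 * a ^ 3 := by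
    calc y ^ 3 ≤ (6 * a) ^ 3 := Nat.pow_le_pow_left hyle 3
      _ = 216 * a ^ 3 := by ring
  have ha0 : 0 < a := by omega
  have hq'0 : 36 * (a : ℤ) ^ 2 ≤ q' := by
    have h6 : (0 : ℤ) < (6 * a : ℕ) := by positivity
    refine le_of_mul_le_mul_left ?_ h6
    rw [← hq']
    push_cast
    zify at hl₁ hy3
    nlinarith
  lift q' to ℕ using le_trans (by positivity) hq'0 with q
  have hn_eq : n = 8 * a ^ 3 + y ^ 3 + 6 * a * q := by
    zify
    push_cast at hq'
    linear_combination hq'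
  have hq_le : 36 * a ^ 2 ≤ q := mod_cast hq'0
  have hq_lt : q < 37600 * a ^ 2 := by
    refine lt_of_mul_lt_mul_left (a := 6 * a) ?_ (Nat.zero_le _)
    rw [show 6 * a * (37600 * a ^ 2) = 225600 * a ^ 3 by ring]
    omega
  clear hq'0 hq' hdvd hodd hl₁ hl₂
  obtain ⟨w, hw₀, -, hw₁, hw₂⟩ := exists_le_lt_succ (f := fun w => 36 * w ^ 3) (q := q) (A := q)
    (by nlinarith) (by nlinarith [Nat.le_self_pow (n := 3) (by norm_num) (q + 1)])
  obtain ⟨t, rfl⟩ := Nat.exists_eq_add_of_le hw₁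
  have hwa : 16 * w < a := by
    by_contra! hle
    have : w ^ 3 * 36 < 37600 * (16 * w) ^ 2 := by
      have := Nat.pow_le_pow_left hle 2
      nlinarith
    have : 36 * w < 37600 * 256 := by nlinarith [pow_pos hw₀ 2]
    omega
  have ht : t < a ^ 2 := by
    have : t < 36 * (3 * w ^ 2 + 3 * w + 1) := by nlinarith
    nlinarith
  convert ((isRepr_eight_symmetric ht).add_pow hy).add_pow
    (show 0 < 6 * 2 ^ l * w by positivity) using 1
  have : (6 * 2 ^ l * w) ^ 3 = 216 * a * w ^ 3 := by
    rw [ha, show 8 = 2 ^ 3 by norm_num, ← pow_mul, mul_comm 3 l, pow_mul]; ring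
  rw [hn_eq, this]
  ring

theorem isRepr_fourteen {m : ℕ} (h : m ∉ B3) : IsRepr (m + 14) 14 3 := by
  rcases lt_or_ge m (10 ^ 28) with hlt | hge
  · exact isRepr_fourteen_of_lt h hlt
  rcases Nat.even_or_odd m with hm | hm
  · obtain ⟨c, hc⟩ := hm
    convert ((((isRepr_ten_of_odd (n := m + 14 - 11) ⟨c + 1, by omega⟩ (by omega)).add_pow
      one_pos).add_pow one_pos).add_pow one_pos).add_pow two_pos using 1
    omega
  · obtain ⟨c, hc⟩ := hm
    convert ((((isRepr_ten_of_odd (n := m + 14 - 4) ⟨c + 5, by omega⟩ (by omega)).add_pow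
      one_pos).add_pow one_pos).add_pow one_pos).add_pow one_pos using 1
    omega

/-- for every `j ≥ 14`, every integer `n ≥ j` with `n - j ∉ B³` is the
sum of exactly `j` positive cubes. -/
theorem stmt_13 :
    ∀ j : ℕ, 14 ≤ j → ∀ n : ℕ, j ≤ n → n - j ∉ B3 → IsRepr n j 3 := by
  intro j hj n hn h
  simpa only [Nat.sub_add_cancel hn] using (isRepr_fourteen h).add_of_le hj
end
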